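/- Fix θ > 0 and 0 < a < b, and let (c0, c1) be the unique pair with c0 > c1 > 0 such that J(s_a) = a and J(s_b) = b. If a Borel probability measure μ on [a, b] and a constant ℓ ∈ ℝ satisfy the Euler–Lagrange equality, then ℓ = −log c1 − θ·log c0. -/

import Mathlib

/-!
Why the identity holds. Integrating the Euler–Lagrange equality against a probability measure `ν`
on `[a, b]` and exchanging the integrals gives
`-ℓ = ∫ (∫ log|x − y| dν(x) + ∫ log|x^θ − y^θ| dν(x)) dμ(y)`, so it is enough to produce one `ν`
for which the inner sum is the constant `log c1 + θ log c0` on `[a, b]`.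

In the coordinate `w = log s`, let `γ` be the curve `w = U φ + i φ`, `0 < φ < π`, on which `J(e^w)`
is real and positive. It runs from `log s_b` (at `φ = 0`) to `log (-s_a) + i π` (at `φ = π`), and
`X φ = J(e^(γ φ))` decreases from `b` to `a`. The measure `ν` is the image of `dφ/π` under `X`.

On the part `Om` of the strip `0 < Im w < π` to the right of the curve, `J` takes values in the
upper half plane, and `fd w = π⁻¹ ∫ log (J(e^w) − X φ) dφ − w − log c1` is holomorphic there. On
the boundary `J` is real, and at a boundary point of height `t` it lies below `X φ` exactly for
`φ < t`; hence the integral has imaginary part `π t`, and `Im fd` tends to `0` at the boundary.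
Since also `fd → 0` as `Re w → ∞`, the maximum principle gives `fd = 0` (`fd_zero`). Letting `w`
tend to the curve gives the logarithmic potential (`potential`):
`π⁻¹ ∫ log|X ψ − X φ| dψ = U φ + log c1`.

The function `J^θ`, in the variable `1/s`, belongs to the same family of maps `(A s + B)(C + D/s)^p`:
its curve is the reflected one, `-U`, and its boundary values are `X^θ` (`U_dual`, `X_dual`). The
same result therefore gives `π⁻¹ ∫ log|X ψ ^ θ − X φ ^ θ| dψ = -U φ + θ log c0`. In the sum the
function `U` cancels. The structure `Par` collects what the argument uses about the parameters,
so that both maps are treated at once.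
-/

open MeasureTheory

/-- The map `J(s; c0, c1) = (c1*s + c0) * ((s+1)/s)^(1/θ)` for real `s`,
using the real power of the positive quantity `(s+1)/s`. -/
noncomputable def Jmap (θ c0 c1 s : ℝ) : ℝ :=
  (c1 * s + c0) * ((s + 1) / s) ^ (1 / θ)

/-- `s_a = (1−θ)/(2θ) − (1/(2θ))·√(4θ·(c0/c1) + (1−θ)²)`. -/
noncomputable def sA (θ r : ℝ) : ℝ :=
  (1 - θ) / (2 * θ) - 1 / (2 * θ) * Real.sqrt (4 * θ * r + (1 - θ) ^ 2)

/-- `s_b = (1−θ)/(2θ) + (1/(2θ))·√(4θ·(c0/c1) + (1−θ)²)`. -/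
noncomputable def sB (θ r : ℝ) : ℝ :=
  (1 - θ) / (2 * θ) + 1 / (2 * θ) * Real.sqrt (4 * θ * r + (1 - θ) ^ 2)

/-! ### The family of maps, its logarithm and univalence -/

namespace EqMeas

open Filter Topology Set

/-- Parameters of the map `s ↦ (A s + B)(C + D/s)^p`. The equations `sum` and `prod` say that `sb` and
`-ra` are the two critical points of its logarithm; `low` and `high` say that both factors are
positive at `-ra`, and `lt` compares the two critical values. -/
structure Par where
  (A B C D p sb ra : ℝ)
  hA : 0 < A
  hB : 0 < B
  hC : 0 < C
  hD : 0 < D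
  hp : 0 < p
  hsb : 0 < sb
  hra : 0 < ra
  sum : C * (ra - sb) = (1 - p) * D
  prod : A * C * (sb * ra) = p * (B * D)
  low : D < C * ra
  high : A * ra < B
  lt : (B - A * ra) * ((C - D / ra) ^ p) < (A * sb + B) * ((C + D / sb) ^ p)

variable (P : Par)

/-- The point `u + iφ` of the logarithmic plane. -/
def pt (u φ : ℝ) : ℂ := ⟨u, φ⟩

@[simp] lemma pt_re (u φ : ℝ) : (pt u φ).re = u := rfl
@[simp] lemma pt_im (u φ : ℝ) : (pt u φ).im = φ := rfl

lemma pt_eta (w : ℂ) : pt w.re w.im = w := rfl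

@[fun_prop] lemma continuous_pt : Continuous (fun q : ℝ × ℝ => pt q.1 q.2) := by
  have : (fun q : ℝ × ℝ => pt q.1 q.2) = fun q => (q.1 : ℂ) + q.2 * Complex.I := by
    funext q; apply Complex.ext <;> simp
  rw [this]; fun_prop

/-- The factor `A s + B` at `s = exp w`. -/
noncomputable def E1 (w : ℂ) : ℂ := P.A * Complex.exp w + P.B

/-- The factor `C + D/s` at `s = exp w`. -/
noncomputable def E2 (w : ℂ) : ℂ := P.C + P.D * Complex.exp (-w)

/-- The logarithm of the map, in the coordinate `w = log s`. The logarithm is taken factor by factor,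
so it is holomorphic on the whole strip `0 < Im w < π`. -/
noncomputable def Lam (w : ℂ) : ℂ := Complex.log (E1 P w) + P.p * Complex.log (E2 P w)

/-- The derivative of `Lam` with respect to `w`. -/
noncomputable def dLam (w : ℂ) : ℂ :=
  P.A * Complex.exp w / E1 P w - P.p * (P.D * Complex.exp (-w) / E2 P w)

/-- The map itself, in the coordinate `w = log s`. Unlike `Lam` it is continuous across the zero
of `A s + B`. -/
noncomputable def Jc (w : ℂ) : ℂ := E1 P w * Complex.exp (P.p * Complex.log (E2 P w))

lemma E1_re (w : ℂ) : (E1 P w).re = P.A * (Real.exp w.re * Real.cos w.im) + P.B := by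
  simp [E1, Complex.exp_re]
lemma E1_im (w : ℂ) : (E1 P w).im = P.A * (Real.exp w.re * Real.sin w.im) := by
  simp [E1, Complex.exp_im]
lemma E2_re (w : ℂ) : (E2 P w).re = P.C + P.D * (Real.exp (-w.re) * Real.cos w.im) := by
  simp [E2, Complex.exp_re]
lemma E2_im (w : ℂ) : (E2 P w).im = -(P.D * (Real.exp (-w.re) * Real.sin w.im)) := by
  simp [E2, Complex.exp_im]

lemma E1_im_pos {w : ℂ} (h0 : 0 < w.im) (h1 : w.im < Real.pi) : 0 < (E1 P w).im := by
  rw [E1_im]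
  have := Real.sin_pos_of_pos_of_lt_pi h0 h1
  have := P.hA
  positivity

lemma E2_im_neg {w : ℂ} (h0 : 0 < w.im) (h1 : w.im < Real.pi) : (E2 P w).im < 0 := by
  rw [E2_im]
  have := Real.sin_pos_of_pos_of_lt_pi h0 h1
  have := P.hD
  have : 0 < P.D * (Real.exp (-w.re) * Real.sin w.im) := by positivity
  linarith

lemma E1_slit {w : ℂ} (h0 : 0 ≤ w.im) (h1 : w.im ≤ Real.pi)
    (h : w.im = Real.pi → P.A * Real.exp w.re < P.B) : E1 P w ∈ Complex.slitPlane := by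
  rw [Complex.mem_slitPlane_iff]
  rcases h0.eq_or_lt with h0 | h0
  · left; rw [E1_re, ← h0]
    have := P.hA; have := P.hB
    simp; positivity
  rcases h1.eq_or_lt with h1 | h1
  · left; rw [E1_re, h1]
    have := h h1
    simp; linarith
  · right; exact (E1_im_pos P h0 h1).ne'

lemma E2_slit {w : ℂ} (h0 : 0 ≤ w.im) (h1 : w.im ≤ Real.pi)
    (h : w.im = Real.pi → P.D < P.C * Real.exp w.re) : E2 P w ∈ Complex.slitPlane := by
  rw [Complex.mem_slitPlane_iff]
  rcases h0.eq_or_lt with h0 | h0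
  · left; rw [E2_re, ← h0]
    have := P.hC; have := P.hD
    simp; positivity
  rcases h1.eq_or_lt with h1 | h1
  · left; rw [E2_re, h1]
    have h2 := h h1
    have h3 := Real.exp_pos w.re
    have : P.D * Real.exp (-w.re) < P.C := by
      rw [Real.exp_neg, ← div_eq_mul_inv, div_lt_iff₀ h3]; exact h2
    simp; linarith
  · right; exact (E2_im_neg P h0 h1).ne

lemma E1_slit' {w : ℂ} (h0 : 0 ≤ w.im) (h1 : w.im < Real.pi) : E1 P w ∈ Complex.slitPlane :=
  E1_slit P h0 h1.le (fun h => absurd h h1.ne)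

lemma E2_slit' {w : ℂ} (h0 : 0 ≤ w.im) (h1 : w.im < Real.pi) : E2 P w ∈ Complex.slitPlane :=
  E2_slit P h0 h1.le (fun h => absurd h h1.ne)

lemma hasDerivAt_E1 (w : ℂ) : HasDerivAt (E1 P) (P.A * Complex.exp w) w := by
  unfold E1
  exact ((Complex.hasDerivAt_exp w).const_mul _).add_const _

lemma hasDerivAt_E2 (w : ℂ) : HasDerivAt (E2 P) (-(P.D * Complex.exp (-w))) w := by
  unfold E2
  have := (((hasDerivAt_neg w).cexp).const_mul (P.D : ℂ)).const_add (P.C : ℂ)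
  exact this.congr_deriv (by ring)

@[fun_prop] lemma continuous_E1 : Continuous (E1 P) := by unfold E1; fun_prop
@[fun_prop] lemma continuous_E2 : Continuous (E2 P) := by unfold E2; fun_prop

lemma hasDerivAt_Lam {w : ℂ} (h1 : E1 P w ∈ Complex.slitPlane) (h2 : E2 P w ∈ Complex.slitPlane) :
    HasDerivAt (Lam P) (dLam P w) w := by
  have a := (hasDerivAt_E1 P w).clog h1
  have b := ((hasDerivAt_E2 P w).clog h2).const_mul (P.p : ℂ)
  exact (a.add b).congr_deriv (by unfold dLam; ring)

lemma hasDerivAt_Jc {w : ℂ} (h2 : E2 P w ∈ Complex.slitPlane) :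
    ∃ d, HasDerivAt (Jc P) d w := by
  have b := (((hasDerivAt_E2 P w).clog h2).const_mul (P.p : ℂ)).cexp
  exact ⟨_, (hasDerivAt_E1 P w).mul b⟩

lemma continuousAt_Jc {w : ℂ} (h2 : E2 P w ∈ Complex.slitPlane) : ContinuousAt (Jc P) w :=
  (hasDerivAt_Jc P h2).choose_spec.continuousAt

lemma Jc_eq_exp {w : ℂ} (h1 : E1 P w ∈ Complex.slitPlane) : Jc P w = Complex.exp (Lam P w) := by
  rw [Lam, Complex.exp_add, Complex.exp_log (Complex.slitPlane_ne_zero h1), Jc]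

/-- The derivative is `1 − B/(A s + B) − p (1 − C/(C + D/s))`, and on the strip both fractions
contribute positively to the imaginary part. -/
lemma dLam_im_pos {w : ℂ} (h0 : 0 < w.im) (h1 : w.im < Real.pi) : 0 < (dLam P w).im := by
  have e1 := E1_im_pos P h0 h1
  have e2 := E2_im_neg P h0 h1
  have n1 : E1 P w ≠ 0 := fun h => by simp [h] at e1
  have n2 : E2 P w ≠ 0 := fun h => by simp [h] at e2
  have : dLam P w = 1 - P.B * (E1 P w)⁻¹ - P.p * (1 - P.C * (E2 P w)⁻¹) := by
    unfold dLam
    have a : (P.A : ℂ) * Complex.exp w = E1 P w - P.B := by unfold E1; ring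
    have b : (P.D : ℂ) * Complex.exp (-w) = E2 P w - P.C := by unfold E2; ring
    rw [a, b]; field_simp
  rw [this]
  have i1 : 0 < Complex.normSq (E1 P w) := Complex.normSq_pos.2 n1
  have i2 : 0 < Complex.normSq (E2 P w) := Complex.normSq_pos.2 n2
  simp only [Complex.sub_im, Complex.one_im, Complex.im_ofReal_mul,
    Complex.inv_im, zero_sub]
  have := P.hB; have := P.hC; have := P.hp
  have x1 : 0 < P.B * ((E1 P w).im / Complex.normSq (E1 P w)) := by positivity
  have x2 : 0 < P.p * (P.C * (-(E2 P w).im / Complex.normSq (E2 P w))) := by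
    have : 0 < -(E2 P w).im := by linarith
    positivity
  have : -(E1 P w).im / Complex.normSq (E1 P w) = -((E1 P w).im / Complex.normSq (E1 P w)) := by ring
  rw [this]
  nlinarith

/-- The Noshiro–Warschawski argument: the difference quotient of `Lam` is the average of `dLam` over
the segment from `w1` to `w2`, so its imaginary part is positive. In particular `Lam w1 ≠ Lam w2`.
The end points may lie on the boundary of the strip. -/
lemma seg {w1 w2 : ℂ} (g1 : E1 P w1 ∈ Complex.slitPlane) (g1' : E2 P w1 ∈ Complex.slitPlane)
    (g2 : E1 P w2 ∈ Complex.slitPlane) (g2' : E2 P w2 ∈ Complex.slitPlane) (hne : w1 ≠ w2)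
    (hS : ∀ t ∈ Ioo (0:ℝ) 1, 0 < (w1 + t * (w2 - w1)).im ∧ (w1 + t * (w2 - w1)).im < Real.pi) :
    0 < ((Lam P w2 - Lam P w1) / (w2 - w1)).im := by
  have hd : w2 - w1 ≠ 0 := sub_ne_zero.2 hne.symm
  have good : ∀ t ∈ Icc (0:ℝ) 1, E1 P (w1 + t * (w2 - w1)) ∈ Complex.slitPlane ∧
      E2 P (w1 + t * (w2 - w1)) ∈ Complex.slitPlane := by
    intro t ht
    rcases ht.1.eq_or_lt with h | h
    · rw [← h]; simp [g1, g1']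
    rcases ht.2.eq_or_lt with h' | h'
    · rw [h']; simp [g2, g2']
    · have := hS t ⟨h, h'⟩
      exact ⟨E1_slit' P this.1.le this.2, E2_slit' P this.1.le this.2⟩
  set g : ℝ → ℝ := fun t => (Lam P (w1 + t * (w2 - w1)) / (w2 - w1)).im with hg
  have hder : ∀ t ∈ Icc (0:ℝ) 1, HasDerivAt g (dLam P (w1 + t * (w2 - w1))).im t := by
    intro t ht
    have h1 : HasDerivAt (fun z : ℂ => Lam P (w1 + z * (w2 - w1)) / (w2 - w1))
        (dLam P (w1 + t * (w2 - w1))) (t : ℂ) := by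
      have i1 : HasDerivAt (fun z : ℂ => w1 + z * (w2 - w1)) (w2 - w1) (t : ℂ) := by
        simpa using ((hasDerivAt_id (t : ℂ)).mul_const (w2 - w1)).const_add w1
      have := ((hasDerivAt_Lam P (good t ht).1 (good t ht).2).comp (t : ℂ) i1).div_const (w2 - w1)
      exact this.congr_deriv (by field_simp)
    exact (Complex.imCLM.hasFDerivAt.comp_hasDerivAt t h1.comp_ofReal)
  have mono : StrictMonoOn g (Icc 0 1) := by
    apply strictMonoOn_of_deriv_pos (convex_Icc 0 1)
    · exact fun t ht => (hder t ht).continuousAt.continuousWithinAt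
    · intro t ht
      rw [interior_Icc] at ht
      rw [(hder t (Ioo_subset_Icc_self ht)).deriv]
      exact dLam_im_pos P (hS t ht).1 (hS t ht).2
  have := mono (left_mem_Icc.2 zero_le_one) (right_mem_Icc.2 zero_le_one) zero_lt_one
  simp only [hg] at this
  rw [sub_div, Complex.sub_im]
  simpa using this

lemma Lam_im_strictMono {φ : ℝ} (h0 : 0 < φ) (h1 : φ < Real.pi) :
    StrictMono (fun u => (Lam P (pt u φ)).im) := by
  intro u v huv
  have := seg P (w1 := pt u φ) (w2 := pt v φ) (E1_slit' P h0.le h1) (E2_slit' P h0.le h1)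
    (E1_slit' P h0.le h1) (E2_slit' P h0.le h1) (fun h => huv.ne (congrArg Complex.re h))
    (by intro t _; simp [h0, h1])
  have e : pt v φ - pt u φ = ((v - u : ℝ) : ℂ) := by apply Complex.ext <;> simp
  rw [e, Complex.div_ofReal_im] at this
  have h2 : 0 < v - u := sub_pos.2 huv
  have := (div_pos_iff_of_pos_right h2).1 this
  simp only [Complex.sub_im] at this
  show (Lam P (pt u φ)).im < (Lam P (pt v φ)).im
  linarith

lemma Lam_im (w : ℂ) : (Lam P w).im = (E1 P w).arg + P.p * (E2 P w).arg := by
  simp [Lam, Complex.log_im]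

lemma Lam_im_lt {w : ℂ} (h0 : 0 < w.im) (h1 : w.im < Real.pi) : (Lam P w).im < Real.pi := by
  rw [Lam_im]
  have a : (E1 P w).arg ≤ Real.pi := Complex.arg_le_pi _
  have b : (E2 P w).arg < 0 := Complex.arg_neg_iff.2 (E2_im_neg P h0 h1)
  have := P.hp
  nlinarith

lemma continuousAt_Lam {w : ℂ} (h1 : E1 P w ∈ Complex.slitPlane)
    (h2 : E2 P w ∈ Complex.slitPlane) : ContinuousAt (Lam P) w :=
  (hasDerivAt_Lam P h1 h2).continuousAt

/-- At the right end of a horizontal line the map behaves like a multiple of `s`. -/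
lemma tendsto_Lam_im_atTop {φ : ℝ} (h0 : 0 < φ) (h1 : φ < Real.pi) :
    Tendsto (fun u => (Lam P (pt u φ)).im) atTop (𝓝 φ) := by
  have hs : Complex.exp (φ * Complex.I) ∈ Complex.slitPlane := by
    rw [Complex.mem_slitPlane_iff]; right
    rw [Complex.exp_ofReal_mul_I_im]; exact (Real.sin_pos_of_pos_of_lt_pi h0 h1).ne'
  have e1 : ∀ u : ℝ, (E1 P (pt u φ)).arg =
      ((P.A : ℂ) * Complex.exp (φ * Complex.I) + P.B * (Real.exp (-u) : ℂ)).arg := by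
    intro u
    rw [← Complex.arg_real_mul (E1 P (pt u φ)) (Real.exp_pos (-u))]
    congr 1
    have : pt u φ = u + φ * Complex.I := by apply Complex.ext <;> simp
    rw [E1, this, Complex.exp_add, Complex.ofReal_exp, mul_add]
    have : Complex.exp (-u : ℝ) * Complex.exp u = 1 := by
      rw [← Complex.exp_add]; simp
    linear_combination (P.A * Complex.exp (φ * Complex.I)) * this
  have lim0 : Tendsto (fun u : ℝ => (Real.exp (-u) : ℂ)) atTop (𝓝 0) := by
    have := (Complex.continuous_ofReal.tendsto 0).comp Real.tendsto_exp_neg_atTop_nhds_zero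
    simpa [Function.comp_def] using this
  have t1 : Tendsto (fun u => (E1 P (pt u φ)).arg) atTop (𝓝 φ) := by
    simp only [e1]
    have : (((P.A : ℂ) * Complex.exp (φ * Complex.I)) + P.B * 0).arg = φ := by
      rw [mul_zero, add_zero, Complex.arg_real_mul _ P.hA, Complex.arg_exp_mul_I]
      exact (toIocMod_eq_self _).2 ⟨by linarith [Real.pi_pos], by linarith [Real.pi_pos]⟩
    conv => rhs; rw [← this]
    refine (Complex.continuousAt_arg ?_).tendsto.comp (tendsto_const_nhds.add (lim0.const_mul _))
    rw [mul_zero, add_zero, Complex.mem_slitPlane_iff]; right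
    have := Real.sin_pos_of_pos_of_lt_pi h0 h1
    have := P.hA
    simp only [Complex.im_ofReal_mul, Complex.exp_ofReal_mul_I_im]
    positivity
  have t2 : Tendsto (fun u => (E2 P (pt u φ)).arg) atTop (𝓝 0) := by
    have : Tendsto (fun u => E2 P (pt u φ)) atTop (𝓝 (P.C : ℂ)) := by
      have e : ∀ u : ℝ, E2 P (pt u φ) =
          P.C + P.D * ((Real.exp (-u) : ℂ) * Complex.exp (-(φ * Complex.I))) := by
        intro u
        have : pt u φ = u + φ * Complex.I := by apply Complex.ext <;> simp
        rw [E2, this, Complex.ofReal_exp, ← Complex.exp_add]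
        congr 3; push_cast; ring
      simp only [e]
      have := ((lim0.mul_const (Complex.exp (-(φ * Complex.I)))).const_mul (P.D : ℂ)).const_add (P.C : ℂ)
      simpa using this
    have h := (Complex.continuousAt_arg (x := (P.C : ℂ))
      (by rw [Complex.mem_slitPlane_iff]; left; simpa using P.hC)).tendsto.comp this
    rwa [Complex.arg_ofReal_of_nonneg P.hC.le] at h
  simp only [Lam_im]
  simpa using t1.add (t2.const_mul P.p)

/-- At the left end of a horizontal line the map behaves like a multiple of `s ^ (-p)`. -/
lemma tendsto_Lam_im_atBot {φ : ℝ} (h0 : 0 < φ) (h1 : φ < Real.pi) :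
    Tendsto (fun u => (Lam P (pt u φ)).im) atBot (𝓝 (P.p * -φ)) := by
  have lim0 : Tendsto (fun u : ℝ => (Real.exp u : ℂ)) atBot (𝓝 0) := by
    have := (Complex.continuous_ofReal.tendsto 0).comp Real.tendsto_exp_atBot
    simpa [Function.comp_def] using this
  have e1 : ∀ u : ℝ, (E2 P (pt u φ)).arg =
      ((P.C : ℂ) * (Real.exp u : ℂ) + P.D * Complex.exp ((-φ : ℝ) * Complex.I)).arg := by
    intro u
    rw [← Complex.arg_real_mul (E2 P (pt u φ)) (Real.exp_pos u)]
    congr 1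
    have : -pt u φ = (-u : ℝ) + (-φ : ℝ) * Complex.I := by apply Complex.ext <;> simp
    rw [E2, this, Complex.exp_add, Complex.ofReal_exp, mul_add]
    have : Complex.exp u * Complex.exp (-u : ℝ) = 1 := by
      rw [← Complex.exp_add]; simp
    linear_combination (P.D * Complex.exp ((-φ : ℝ) * Complex.I)) * this
  have t1 : Tendsto (fun u => (E2 P (pt u φ)).arg) atBot (𝓝 (-φ)) := by
    simp only [e1]
    have : (((P.C : ℂ) * 0) + P.D * Complex.exp ((-φ : ℝ) * Complex.I)).arg = -φ := by
      rw [mul_zero, zero_add, Complex.arg_real_mul _ P.hD, Complex.arg_exp_mul_I]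
      exact (toIocMod_eq_self _).2 ⟨by linarith [Real.pi_pos], by linarith [Real.pi_pos]⟩
    conv => rhs; rw [← this]
    refine (Complex.continuousAt_arg ?_).tendsto.comp ((lim0.const_mul _).add tendsto_const_nhds)
    rw [mul_zero, zero_add, Complex.mem_slitPlane_iff]; right
    have := Real.sin_pos_of_pos_of_lt_pi h0 h1
    have := P.hD
    simp only [Complex.im_ofReal_mul, Complex.exp_ofReal_mul_I_im, Real.sin_neg]
    have : 0 < P.D * Real.sin φ := by positivity
    linarith
  have t2 : Tendsto (fun u => (E1 P (pt u φ)).arg) atBot (𝓝 0) := by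
    have : Tendsto (fun u => E1 P (pt u φ)) atBot (𝓝 (P.B : ℂ)) := by
      have e : ∀ u : ℝ, E1 P (pt u φ) =
          P.A * ((Real.exp u : ℂ) * Complex.exp (φ * Complex.I)) + P.B := by
        intro u
        have : pt u φ = u + φ * Complex.I := by apply Complex.ext <;> simp
        rw [E1, this, Complex.ofReal_exp, ← Complex.exp_add]
      simp only [e]
      have := ((lim0.mul_const (Complex.exp (φ * Complex.I))).const_mul (P.A : ℂ)).add_const (P.B : ℂ)
      simpa using this
    have h := (Complex.continuousAt_arg (x := (P.B : ℂ))
      (by rw [Complex.mem_slitPlane_iff]; left; simpa using P.hB)).tendsto.comp this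
    rwa [Complex.arg_ofReal_of_nonneg P.hB.le] at h
  simp only [Lam_im]
  simpa using t2.add (t1.const_mul P.p)

lemma exists_zero {φ : ℝ} (h0 : 0 < φ) (h1 : φ < Real.pi) : ∃ u, (Lam P (pt u φ)).im = 0 := by
  have hc : Continuous (fun u => (Lam P (pt u φ)).im) := by
    rw [continuous_iff_continuousAt]
    intro u
    have := continuousAt_Lam P (w := pt u φ) (E1_slit' P h0.le h1) (E2_slit' P h0.le h1)
    exact Complex.continuous_im.continuousAt.comp (this.comp (f := fun u => pt u φ)
      (by fun_prop))
  obtain ⟨u, hu⟩ := ((tendsto_Lam_im_atTop P h0 h1).eventually_const_lt h0).exists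
  have hneg : P.p * -φ < 0 := by have := P.hp; nlinarith
  obtain ⟨v, hv⟩ := ((tendsto_Lam_im_atBot P h0 h1).eventually_lt_const hneg).exists
  obtain ⟨x, hx⟩ := mem_range_of_exists_le_of_exists_ge hc ⟨v, hv.le⟩ ⟨u, hu.le⟩
  exact ⟨x, hx⟩

end EqMeas

/-! ### The curve on which the map is real -/

namespace EqMeas

open Filter Topology Set

variable (P : Par)

lemma E1_zero (u : ℝ) : E1 P (pt u 0) = ((P.A * Real.exp u + P.B : ℝ) : ℂ) := by
  apply Complex.ext
  · rw [Complex.ofReal_re, E1_re]; simp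
  · rw [Complex.ofReal_im, E1_im]; simp
lemma E2_zero (u : ℝ) : E2 P (pt u 0) = ((P.C + P.D / Real.exp u : ℝ) : ℂ) := by
  apply Complex.ext
  · rw [Complex.ofReal_re, E2_re]; simp [Real.exp_neg, div_eq_mul_inv]
  · rw [Complex.ofReal_im, E2_im]; simp
lemma E1_pi (u : ℝ) : E1 P (pt u Real.pi) = ((P.B - P.A * Real.exp u : ℝ) : ℂ) := by
  apply Complex.ext
  · rw [Complex.ofReal_re, E1_re]; simp; ring
  · rw [Complex.ofReal_im, E1_im]; simp
lemma E2_pi (u : ℝ) : E2 P (pt u Real.pi) = ((P.C - P.D / Real.exp u : ℝ) : ℂ) := by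
  apply Complex.ext
  · rw [Complex.ofReal_re, E2_re]; simp [Real.exp_neg, div_eq_mul_inv]; ring
  · rw [Complex.ofReal_im, E2_im]; simp

lemma E1_zero_pos (u : ℝ) : 0 < P.A * Real.exp u + P.B := by
  have := P.hA; have := P.hB; positivity
lemma E2_zero_pos (u : ℝ) : 0 < P.C + P.D / Real.exp u := by
  have := P.hC; have := P.hD; positivity
lemma E2_pi_pos {u : ℝ} (h : P.D < P.C * Real.exp u) : 0 < P.C - P.D / Real.exp u := by
  have := Real.exp_pos u
  rw [sub_pos, div_lt_iff₀ this]; exact h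

/-- On the positive axis the logarithmic derivative vanishes only at `s = sb`. -/
lemma dLam_zero (u : ℝ) : (dLam P (pt u 0)).re =
    P.A * P.C * (Real.exp u - P.sb) * (Real.exp u + P.ra) /
      ((P.A * Real.exp u + P.B) * (P.C * Real.exp u + P.D)) := by
  have h1 := E1_zero_pos P u
  have h2 := E2_zero_pos P u
  have h3 := Real.exp_pos u
  have h4 : 0 < P.C * Real.exp u + P.D := by
    have := P.hC; have := P.hD; positivity
  have : dLam P (pt u 0) = ((P.A * Real.exp u / (P.A * Real.exp u + P.B) -
      P.p * (P.D * (Real.exp u)⁻¹ / (P.C + P.D / Real.exp u)) : ℝ) : ℂ) := by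
    have e : pt u 0 = (u : ℂ) := by apply Complex.ext <;> simp
    rw [dLam, E1_zero, E2_zero, e]
    push_cast [Complex.exp_neg]; rfl
  rw [this, Complex.ofReal_re]
  have e : P.C + P.D / Real.exp u = (P.C * Real.exp u + P.D) / Real.exp u := by field_simp
  rw [e]
  have k : P.D * (Real.exp u)⁻¹ / ((P.C * Real.exp u + P.D) / Real.exp u) =
      P.D / (P.C * Real.exp u + P.D) := by field_simp
  have s := P.sum
  have q := P.prod
  rw [k, mul_div_assoc', div_sub_div _ _ h1.ne' h4.ne']
  congr 1
  linear_combination (-P.A * Real.exp u) * s + q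

/-- On the negative axis `s = -e^u`, where both factors are positive, the logarithmic derivative
vanishes only at `s = -ra`. -/
lemma dLam_pi {u : ℝ} (h1 : P.D < P.C * Real.exp u) (h2 : P.A * Real.exp u < P.B) :
    (dLam P (pt u Real.pi)).re =
    - (P.A * P.C * (Real.exp u + P.sb) * (Real.exp u - P.ra) /
      ((P.B - P.A * Real.exp u) * (P.C * Real.exp u - P.D))) := by
  have h3 := Real.exp_pos u
  have h4 : P.B - P.A * Real.exp u ≠ 0 := by linarith
  have h5 : P.C * Real.exp u - P.D ≠ 0 := by linarith
  have : dLam P (pt u Real.pi) = ((-(P.A * Real.exp u) / (P.B - P.A * Real.exp u) -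
      P.p * (-(P.D * (Real.exp u)⁻¹) / (P.C - P.D / Real.exp u)) : ℝ) : ℂ) := by
    have e : Complex.exp (pt u Real.pi) = -(Real.exp u : ℂ) := by
      apply Complex.ext <;> simp [Complex.exp_re, Complex.exp_im]
    rw [dLam, E1_pi, E2_pi, Complex.exp_neg, e]
    push_cast
    ring
  rw [this, Complex.ofReal_re]
  have e : P.C - P.D / Real.exp u = (P.C * Real.exp u - P.D) / Real.exp u := by field_simp
  rw [e]
  have k : -(P.D * (Real.exp u)⁻¹) / ((P.C * Real.exp u - P.D) / Real.exp u) =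
      -P.D / (P.C * Real.exp u - P.D) := by field_simp
  have s := P.sum
  have q := P.prod
  rw [k, mul_div_assoc', div_sub_div _ _ h4 h5, ← neg_div]
  congr 1
  linear_combination (-P.A * Real.exp u) * s - q

lemma good_zero (u : ℝ) : E1 P (pt u 0) ∈ Complex.slitPlane ∧ E2 P (pt u 0) ∈ Complex.slitPlane :=
  ⟨E1_slit' P le_rfl Real.pi_pos, E2_slit' P le_rfl Real.pi_pos⟩

lemma good_pi {u : ℝ} (h1 : P.D < P.C * Real.exp u) (h2 : P.A * Real.exp u < P.B) :
    E1 P (pt u Real.pi) ∈ Complex.slitPlane ∧ E2 P (pt u Real.pi) ∈ Complex.slitPlane :=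
  ⟨E1_slit P Real.pi_pos.le le_rfl fun _ => h2, E2_slit P Real.pi_pos.le le_rfl fun _ => h1⟩

lemma Lam_zero (u : ℝ) : Lam P (pt u 0) =
    ((Real.log (P.A * Real.exp u + P.B) + P.p * Real.log (P.C + P.D / Real.exp u) : ℝ) : ℂ) := by
  rw [Lam, E1_zero, E2_zero, ← Complex.ofReal_log (E1_zero_pos P u).le,
    ← Complex.ofReal_log (E2_zero_pos P u).le]
  push_cast; rfl

lemma Lam_pi {u : ℝ} (h1 : P.D < P.C * Real.exp u) (h2 : P.A * Real.exp u < P.B) :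
    Lam P (pt u Real.pi) =
    ((Real.log (P.B - P.A * Real.exp u) + P.p * Real.log (P.C - P.D / Real.exp u) : ℝ) : ℂ) := by
  rw [Lam, E1_pi, E2_pi, ← Complex.ofReal_log (by linarith),
    ← Complex.ofReal_log (E2_pi_pos P h1).le]
  push_cast; rfl

lemma hasDerivAt_vert {u φ : ℝ} (h : E1 P (pt u φ) ∈ Complex.slitPlane ∧
    E2 P (pt u φ) ∈ Complex.slitPlane) :
    HasDerivAt (fun t => (Lam P (pt u t)).im) (dLam P (pt u φ)).re φ := by
  have e : ∀ t : ℝ, pt u t = u + t * Complex.I := by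
    intro t; apply Complex.ext <;> simp
  have i1 : HasDerivAt (fun z : ℂ => (u : ℂ) + z * Complex.I) Complex.I (φ : ℂ) := by
    simpa using ((hasDerivAt_id (φ : ℂ)).mul_const Complex.I).const_add (u : ℂ)
  have h2 := hasDerivAt_Lam P h.1 h.2
  rw [e φ] at h2 ⊢
  have h1 := (h2.comp (φ : ℂ) i1).comp_ofReal
  have := Complex.imCLM.hasFDerivAt.comp_hasDerivAt φ h1
  simp only [e]
  refine this.congr_deriv ?_
  simp

lemma hasDerivAt_horiz {u φ : ℝ} (h : E1 P (pt u φ) ∈ Complex.slitPlane ∧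
    E2 P (pt u φ) ∈ Complex.slitPlane) :
    HasDerivAt (fun t => (Lam P (pt t φ)).re) (dLam P (pt u φ)).re u := by
  have e : ∀ t : ℝ, pt t φ = t + φ * Complex.I := by
    intro t; apply Complex.ext <;> simp
  have i1 : HasDerivAt (fun z : ℂ => z + φ * Complex.I) 1 (u : ℂ) := by
    simpa using ((hasDerivAt_id (u : ℂ)).add_const (φ * Complex.I))
  have h2 := hasDerivAt_Lam P h.1 h.2
  rw [e u] at h2 ⊢
  have h1 := (h2.comp (u : ℂ) i1).comp_ofReal
  have := Complex.reCLM.hasFDerivAt.comp_hasDerivAt u h1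
  simp only [e]
  refine this.congr_deriv ?_
  simp

lemma dLam_zero_pos {u : ℝ} (h : Real.log P.sb < u) : 0 < (dLam P (pt u 0)).re := by
  rw [dLam_zero]
  have h1 := E1_zero_pos P u
  have := Real.exp_pos u
  have : P.sb < Real.exp u := (Real.log_lt_iff_lt_exp P.hsb).1 h
  have : 0 < Real.exp u - P.sb := by linarith
  have := P.hA; have := P.hC; have := P.hD; have := P.hra
  positivity

lemma dLam_zero_neg {u : ℝ} (h : u < Real.log P.sb) : (dLam P (pt u 0)).re < 0 := by
  rw [dLam_zero]
  have h1 := E1_zero_pos P u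
  have := Real.exp_pos u
  have : Real.exp u < P.sb := (Real.lt_log_iff_exp_lt P.hsb).1 h
  have : 0 < P.sb - Real.exp u := by linarith
  have := P.hA; have := P.hC; have := P.hD; have := P.hra
  have : 0 < P.A * P.C * (P.sb - Real.exp u) * (Real.exp u + P.ra) /
      ((P.A * Real.exp u + P.B) * (P.C * Real.exp u + P.D)) := by positivity
  have e : P.A * P.C * (Real.exp u - P.sb) * (Real.exp u + P.ra) /
      ((P.A * Real.exp u + P.B) * (P.C * Real.exp u + P.D)) =
      -(P.A * P.C * (P.sb - Real.exp u) * (Real.exp u + P.ra) /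
      ((P.A * Real.exp u + P.B) * (P.C * Real.exp u + P.D))) := by ring
  linarith

lemma dLam_pi_neg {u : ℝ} (h : Real.log P.ra < u) (h1 : P.D < P.C * Real.exp u)
    (h2 : P.A * Real.exp u < P.B) : (dLam P (pt u Real.pi)).re < 0 := by
  rw [dLam_pi P h1 h2]
  have := Real.exp_pos u
  have : P.ra < Real.exp u := (Real.log_lt_iff_lt_exp P.hra).1 h
  have : 0 < Real.exp u - P.ra := by linarith
  have := P.hA; have := P.hC; have := P.hsb
  have : 0 < P.B - P.A * Real.exp u := by linarith
  have : 0 < P.C * Real.exp u - P.D := by linarith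
  rw [neg_lt_zero]
  positivity

lemma dLam_pi_pos {u : ℝ} (h : u < Real.log P.ra) (h1 : P.D < P.C * Real.exp u)
    (h2 : P.A * Real.exp u < P.B) : 0 < (dLam P (pt u Real.pi)).re := by
  rw [dLam_pi P h1 h2]
  have := Real.exp_pos u
  have : Real.exp u < P.ra := (Real.lt_log_iff_exp_lt P.hra).1 h
  have : 0 < P.ra - Real.exp u := by linarith
  have := P.hA; have := P.hC; have := P.hsb
  have : 0 < P.B - P.A * Real.exp u := by linarith
  have : 0 < P.C * Real.exp u - P.D := by linarith
  have : 0 < P.A * P.C * (Real.exp u + P.sb) * (P.ra - Real.exp u) /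
      ((P.B - P.A * Real.exp u) * (P.C * Real.exp u - P.D)) := by positivity
  have e : -(P.A * P.C * (Real.exp u + P.sb) * (Real.exp u - P.ra) /
      ((P.B - P.A * Real.exp u) * (P.C * Real.exp u - P.D))) =
      (P.A * P.C * (Real.exp u + P.sb) * (P.ra - Real.exp u) /
      ((P.B - P.A * Real.exp u) * (P.C * Real.exp u - P.D))) := by ring
  linarith

/-- Both factors stay positive at `s = -e^u` for `u` near `log ra`. -/
lemma near_ra : ∀ᶠ u in 𝓝 (Real.log P.ra), P.D < P.C * Real.exp u ∧ P.A * Real.exp u < P.B := by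
  have e := Real.exp_log P.hra
  have c1 : ContinuousAt (fun u => P.C * Real.exp u) (Real.log P.ra) := by fun_prop
  have c2 : ContinuousAt (fun u => P.A * Real.exp u) (Real.log P.ra) := by fun_prop
  exact (c1.eventually_const_lt (by simpa [e] using P.low)).and
    (c2.eventually_lt_const (by simpa [e] using P.high))

/-- On the lower edge `Im Lam = 0`, so just above it the sign of `Im Lam` is that of `Re dLam`. The
three lemmas that follow are similar; just below the upper edge the sign is the opposite one. -/
lemma ev_zero_pos {u : ℝ} (h : Real.log P.sb < u) :
    ∀ᶠ φ in 𝓝[>] (0:ℝ), 0 < (Lam P (pt u φ)).im := by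
  have hd := hasDerivAt_vert P (good_zero P u)
  have := eventually_nhdsWithin_sign_eq_of_deriv_pos (by rw [hd.deriv]; exact dLam_zero_pos P h)
    (by rw [Lam_zero, Complex.ofReal_im])
  filter_upwards [this.filter_mono nhdsWithin_le_nhds, self_mem_nhdsWithin] with φ h1 h2
  rw [sign_pos (show 0 < φ - 0 by simpa using h2)] at h1
  exact sign_eq_one_iff.1 h1

lemma ev_zero_neg {u : ℝ} (h : u < Real.log P.sb) :
    ∀ᶠ φ in 𝓝[>] (0:ℝ), (Lam P (pt u φ)).im < 0 := by
  have hd := (hasDerivAt_vert P (good_zero P u)).neg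
  have := eventually_nhdsWithin_sign_eq_of_deriv_pos
    (by rw [hd.deriv]; linarith [dLam_zero_neg P h])
    (by simp [Lam_zero])
  filter_upwards [this.filter_mono nhdsWithin_le_nhds, self_mem_nhdsWithin] with φ h1 h2
  rw [sign_pos (show 0 < φ - 0 by simpa using h2)] at h1
  have := sign_eq_one_iff.1 h1
  simp at this
  exact this

lemma ev_pi_pos {u : ℝ} (h : Real.log P.ra < u) (h1 : P.D < P.C * Real.exp u)
    (h2 : P.A * Real.exp u < P.B) :
    ∀ᶠ φ in 𝓝[<] Real.pi, 0 < (Lam P (pt u φ)).im := by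
  have hd := (hasDerivAt_vert P (good_pi P h1 h2)).neg
  have := eventually_nhdsWithin_sign_eq_of_deriv_pos
    (by rw [hd.deriv]; linarith [dLam_pi_neg P h h1 h2])
    (by simp [Lam_pi P h1 h2])
  filter_upwards [this.filter_mono nhdsWithin_le_nhds, self_mem_nhdsWithin] with φ h1 h2
  rw [sign_neg (show φ - Real.pi < 0 by simpa using h2)] at h1
  have := sign_eq_neg_one_iff.1 h1
  simp at this
  exact this

lemma ev_pi_neg {u : ℝ} (h : u < Real.log P.ra) (h1 : P.D < P.C * Real.exp u)
    (h2 : P.A * Real.exp u < P.B) :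
    ∀ᶠ φ in 𝓝[<] Real.pi, (Lam P (pt u φ)).im < 0 := by
  have hd := (hasDerivAt_vert P (good_pi P h1 h2))
  have := eventually_nhdsWithin_sign_eq_of_deriv_pos
    (by rw [hd.deriv]; linarith [dLam_pi_pos P h h1 h2])
    (by simp [Lam_pi P h1 h2])
  filter_upwards [this.filter_mono nhdsWithin_le_nhds, self_mem_nhdsWithin] with φ h1 h2
  rw [sign_neg (show φ - Real.pi < 0 by simpa using h2)] at h1
  exact sign_eq_neg_one_iff.1 h1

/-- On each horizontal line of the strip `Im Lam` increases strictly and has a single zero `U φ`. The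
signs of `Im Lam` on vertical lines give the continuity of `U` and, near the two edges of the strip,
force `U` to tend to the critical points. -/
lemma exists_curve : ∃ U : ℝ → ℝ, Continuous U ∧ U 0 = Real.log P.sb ∧ U Real.pi = Real.log P.ra ∧
    ∀ φ ∈ Ioo 0 Real.pi, (Lam P (pt (U φ) φ)).im = 0 := by
  have hex : ∀ φ : ℝ, ∃ u, φ ∈ Ioo 0 Real.pi → (Lam P (pt u φ)).im = 0 := by
    intro φ
    by_cases h : φ ∈ Ioo 0 Real.pi
    · obtain ⟨u, hu⟩ := exists_zero P h.1 h.2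
      exact ⟨u, fun _ => hu⟩
    · exact ⟨0, fun h' => absurd h' h⟩
  choose v hv using hex
  have key : ∀ (l : Filter ℝ) (x : ℝ), (∀ᶠ φ in l, φ ∈ Ioo 0 Real.pi) →
      (∀ᶠ u in 𝓝 x, x < u → ∀ᶠ φ in l, 0 < (Lam P (pt u φ)).im) →
      (∀ᶠ u in 𝓝 x, u < x → ∀ᶠ φ in l, (Lam P (pt u φ)).im < 0) → Tendsto v l (𝓝 x) := by
    intro l x hl h1 h2
    rw [tendsto_order]
    constructor
    · intro y hy
      obtain ⟨u, hu, hyu, hux⟩ := ((h2.filter_mono (nhdsWithin_le_nhds (s := Iio x))).and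
        (Ioo_mem_nhdsLT hy : ∀ᶠ u in 𝓝[<] x, u ∈ Ioo y x)).exists
      filter_upwards [hl, hu hux] with φ hφ hneg
      rw [← hv φ hφ] at hneg
      exact hyu.trans ((Lam_im_strictMono P hφ.1 hφ.2).lt_iff_lt.1 hneg)
    · intro y hy
      obtain ⟨u, hu, hxu, huy⟩ := ((h1.filter_mono (nhdsWithin_le_nhds (s := Ioi x))).and
        (Ioo_mem_nhdsGT hy : ∀ᶠ u in 𝓝[>] x, u ∈ Ioo x y)).exists
      filter_upwards [hl, hu hxu] with φ hφ hpos
      rw [← hv φ hφ] at hpos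
      exact ((Lam_im_strictMono P hφ.1 hφ.2).lt_iff_lt.1 hpos).trans huy
  have hvert : ∀ u, ∀ φ ∈ Ioo 0 Real.pi, ContinuousAt (fun t => (Lam P (pt u t)).im) φ :=
    fun u φ hφ => (hasDerivAt_vert P
      ⟨E1_slit' P hφ.1.le hφ.2, E2_slit' P hφ.1.le hφ.2⟩).continuousAt
  have hcont : ContinuousOn v (Ioo 0 Real.pi) := by
    intro φ hφ
    apply ContinuousAt.continuousWithinAt
    apply key
    · exact Ioo_mem_nhds hφ.1 hφ.2
    · refine Eventually.of_forall fun u hu => ?_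
      refine (hvert u φ hφ).eventually_const_lt ?_
      rw [← hv φ hφ]; exact Lam_im_strictMono P hφ.1 hφ.2 hu
    · refine Eventually.of_forall fun u hu => ?_
      refine (hvert u φ hφ).eventually_lt_const ?_
      conv_rhs => rw [← hv φ hφ]
      exact Lam_im_strictMono P hφ.1 hφ.2 hu
  have h0 : Tendsto v (𝓝[>] 0) (𝓝 (Real.log P.sb)) :=
    key _ _ (Ioo_mem_nhdsGT Real.pi_pos) (Eventually.of_forall fun u hu => ev_zero_pos P hu)
      (Eventually.of_forall fun u hu => ev_zero_neg P hu)
  have hpi : Tendsto v (𝓝[<] Real.pi) (𝓝 (Real.log P.ra)) :=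
    key _ _ (Ioo_mem_nhdsLT Real.pi_pos)
      ((near_ra P).mono fun u h hu => ev_pi_pos P hu h.1 h.2)
      ((near_ra P).mono fun u h hu => ev_pi_neg P hu h.1 h.2)
  have hE := continuousOn_Icc_extendFrom_Ioo hcont h0 hpi
  refine ⟨IccExtend Real.pi_pos.le ((Icc 0 Real.pi).domRestrict (extendFrom (Ioo 0 Real.pi) v)),
    hE.domRestrict.Icc_extend', ?_, ?_, ?_⟩
  · rw [IccExtend_of_mem _ _ (left_mem_Icc.2 Real.pi_pos.le)]
    exact eq_lim_at_left_extendFrom_Ioo Real.pi_pos h0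
  · rw [IccExtend_of_mem _ _ (right_mem_Icc.2 Real.pi_pos.le)]
    exact eq_lim_at_right_extendFrom_Ioo Real.pi_pos hpi
  · intro φ hφ
    rw [IccExtend_of_mem _ _ (Ioo_subset_Icc_self hφ)]
    have : extendFrom (Ioo 0 Real.pi) v φ = v φ := extendFrom_extends hcont φ hφ
    change (Lam P (pt (extendFrom (Ioo 0 Real.pi) v φ) φ)).im = 0
    rw [this]
    exact hv φ hφ

end EqMeas

/-! ### The region to the right of the curve and its boundary values -/

namespace EqMeas

open Filter Topology Set

variable (P : Par)

/-- The curve `U φ + i φ` on which the map is real and positive. It is extended to a continuous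
function on the whole line; only its values on `[0, π]` matter. -/
noncomputable def U : ℝ → ℝ := (exists_curve P).choose

lemma continuous_U : Continuous (U P) := (exists_curve P).choose_spec.1
lemma U_zero : U P 0 = Real.log P.sb := (exists_curve P).choose_spec.2.1
lemma U_pi : U P Real.pi = Real.log P.ra := (exists_curve P).choose_spec.2.2.1

lemma exp_U_pi : Real.exp (U P Real.pi) = P.ra := by rw [U_pi, Real.exp_log P.hra]
lemma exp_U_zero : Real.exp (U P 0) = P.sb := by rw [U_zero, Real.exp_log P.hsb]

/-- The part of the strip `0 < Im w < π` to the right of the curve. -/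
def Om : Set ℂ := {w | 0 < w.im ∧ w.im < Real.pi ∧ U P w.im < w.re}

/-- The value of the map at the point of the curve at height `φ`; on `[0, π]` that value is real. -/
noncomputable def X (φ : ℝ) : ℝ := (Jc P (pt (U P φ) φ)).re

lemma isOpen_Om : IsOpen (Om P) := by
  have := continuous_U P
  exact (isOpen_lt continuous_const Complex.continuous_im).inter
    ((isOpen_lt Complex.continuous_im continuous_const).inter
      (isOpen_lt (this.comp Complex.continuous_im) Complex.continuous_re))

lemma E1_slit_Om {w : ℂ} (h : w ∈ Om P) : E1 P w ∈ Complex.slitPlane := E1_slit' P h.1.le h.2.1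
lemma E2_slit_Om {w : ℂ} (h : w ∈ Om P) : E2 P w ∈ Complex.slitPlane := E2_slit' P h.1.le h.2.1

lemma E2_slit_Cl {w : ℂ} (h0 : 0 ≤ w.im) (h1 : w.im ≤ Real.pi) (h2 : U P w.im ≤ w.re) :
    E2 P w ∈ Complex.slitPlane := by
  refine E2_slit P h0 h1 fun h => ?_
  rw [h] at h2
  have := Real.exp_le_exp.2 h2
  rw [exp_U_pi] at this
  have l := P.low
  have := P.hC
  nlinarith

lemma good_curve {φ : ℝ} (h : φ ∈ Icc 0 Real.pi) :
    E1 P (pt (U P φ) φ) ∈ Complex.slitPlane ∧ E2 P (pt (U P φ) φ) ∈ Complex.slitPlane := by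
  refine ⟨E1_slit P h.1 h.2 fun h' => ?_, E2_slit_Cl P h.1 h.2 le_rfl⟩
  simp only [pt_im] at h'
  simp only [pt_re, h', exp_U_pi]; exact P.high

lemma low' : P.D < P.C * Real.exp (U P Real.pi) := by rw [exp_U_pi]; exact P.low
lemma high' : P.A * Real.exp (U P Real.pi) < P.B := by rw [exp_U_pi]; exact P.high

lemma Lam_curve_im {φ : ℝ} (h : φ ∈ Icc 0 Real.pi) : (Lam P (pt (U P φ) φ)).im = 0 := by
  rcases h.1.eq_or_lt with h0 | h0
  · rw [← h0, Lam_zero, Complex.ofReal_im]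
  rcases h.2.eq_or_lt with h1 | h1
  · rw [h1, Lam_pi P (low' P) (high' P), Complex.ofReal_im]
  · exact (exists_curve P).choose_spec.2.2.2 φ ⟨h0, h1⟩

lemma Lam_curve {φ : ℝ} (h : φ ∈ Icc 0 Real.pi) :
    Lam P (pt (U P φ) φ) = ((Lam P (pt (U P φ) φ)).re : ℂ) := by
  apply Complex.ext <;> simp [Lam_curve_im P h]

lemma Jc_curve_exp {φ : ℝ} (h : φ ∈ Icc 0 Real.pi) :
    Jc P (pt (U P φ) φ) = (Real.exp (Lam P (pt (U P φ) φ)).re : ℂ) := by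
  rw [Jc_eq_exp P (good_curve P h).1, Complex.ofReal_exp, ← Lam_curve P h]

lemma X_eq {φ : ℝ} (h : φ ∈ Icc 0 Real.pi) : X P φ = Real.exp (Lam P (pt (U P φ) φ)).re := by
  rw [X, Jc_curve_exp P h, Complex.ofReal_re]

lemma Jc_curve {φ : ℝ} (h : φ ∈ Icc 0 Real.pi) : Jc P (pt (U P φ) φ) = (X P φ : ℂ) := by
  rw [X_eq P h, Jc_curve_exp P h]

lemma X_pos {φ : ℝ} (h : φ ∈ Icc 0 Real.pi) : 0 < X P φ := by
  rw [X_eq P h]; exact Real.exp_pos _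

lemma continuousOn_X : ContinuousOn (X P) (Icc 0 Real.pi) := by
  intro φ h
  apply ContinuousAt.continuousWithinAt
  have h1 := continuousAt_Jc P (good_curve P h).2
  have := continuous_U P
  exact Complex.continuous_re.continuousAt.comp (h1.comp (f := fun φ => pt (U P φ) φ)
    (by fun_prop))

lemma Jc_zero (u : ℝ) : Jc P (pt u 0) =
    (((P.A * Real.exp u + P.B) * (P.C + P.D / Real.exp u) ^ P.p : ℝ) : ℂ) := by
  rw [Jc, E1_zero, E2_zero, ← Complex.ofReal_log (E2_zero_pos P u).le,
    Real.rpow_def_of_pos (E2_zero_pos P u)]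
  push_cast
  rw [mul_comm (P.p : ℂ)]

lemma Jc_pi {u : ℝ} (h : P.D < P.C * Real.exp u) : Jc P (pt u Real.pi) =
    (((P.B - P.A * Real.exp u) * (P.C - P.D / Real.exp u) ^ P.p : ℝ) : ℂ) := by
  rw [Jc, E1_pi, E2_pi, ← Complex.ofReal_log (E2_pi_pos P h).le,
    Real.rpow_def_of_pos (E2_pi_pos P h)]
  push_cast
  rw [mul_comm (P.p : ℂ)]

lemma X_zero : X P 0 = (P.A * P.sb + P.B) * (P.C + P.D / P.sb) ^ P.p := by
  rw [X, Jc_zero, Complex.ofReal_re, exp_U_zero]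
lemma X_pi : X P Real.pi = (P.B - P.A * P.ra) * (P.C - P.D / P.ra) ^ P.p := by
  rw [X, Jc_pi P (low' P), Complex.ofReal_re, exp_U_pi]

/-- `X` is injective because the map is univalent on the strip (`seg`), and it goes down from `φ = 0`
to `φ = π` by the comparison of the critical values. -/
lemma strictAntiOn_X : StrictAntiOn (X P) (Icc 0 Real.pi) := by
  apply ContinuousOn.strictAntiOn_of_injOn_Icc Real.pi_pos.le _ (continuousOn_X P)
  · have key : ∀ φ ∈ Icc 0 Real.pi, ∀ ψ ∈ Icc 0 Real.pi, φ < ψ → X P φ ≠ X P ψ := by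
      intro φ hφ ψ hψ hlt heq
      rw [X_eq P hφ, X_eq P hψ] at heq
      have h1 := Real.exp_injective heq
      have h2 : Lam P (pt (U P ψ) ψ) - Lam P (pt (U P φ) φ) = 0 := by
        rw [Lam_curve P hφ, Lam_curve P hψ, h1, sub_self]
      have gφ := good_curve P hφ
      have gψ := good_curve P hψ
      have := seg P gφ.1 gφ.2 gψ.1 gψ.2 (fun h => hlt.ne (congrArg Complex.im h)) (by
        intro t ht
        simp only [Complex.add_im, pt_im, Complex.im_ofReal_mul, Complex.sub_im]
        have h3 : 0 < t * (ψ - φ) := mul_pos ht.1 (sub_pos.2 hlt)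
        have h4 : 0 < (1 - t) * (ψ - φ) := mul_pos (sub_pos.2 ht.2) (sub_pos.2 hlt)
        constructor <;> nlinarith [hφ.1, hψ.2])
      rw [h2] at this
      simp at this
    intro φ hφ ψ hψ heq
    rcases lt_trichotomy φ ψ with h | h | h
    · exact absurd heq (key φ hφ ψ hψ h)
    · exact h
    · exact absurd heq.symm (key ψ hψ φ hφ h)
  · rw [X_zero, X_pi]; exact P.lt.le

/-- On the lower edge of `Om`, to the right of the critical point, the map increases. -/
lemma edge_zero {u : ℝ} (h : U P 0 < u) : ∃ y : ℝ, Jc P (pt u 0) = y ∧ X P 0 < y := by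
  refine ⟨_, Jc_zero P u, ?_⟩
  have hd : ∀ v, HasDerivAt (fun t => (Lam P (pt t 0)).re) (dLam P (pt v 0)).re v :=
    fun v => hasDerivAt_horiz P (good_zero P v)
  have mono : StrictMonoOn (fun t => (Lam P (pt t 0)).re) (Ici (U P 0)) := by
    apply strictMonoOn_of_deriv_pos (convex_Ici _)
    · exact fun v _ => (hd v).continuousAt.continuousWithinAt
    · intro v hv
      rw [interior_Ici] at hv
      rw [(hd v).deriv]
      exact dLam_zero_pos P (by rw [← U_zero]; exact hv)
  have := mono self_mem_Ici h.le h
  have e := Jc_eq_exp P (good_zero P u).1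
  rw [Jc_zero, Lam_zero, ← Complex.ofReal_exp, Complex.ofReal_inj] at e
  rw [e, X_eq P (left_mem_Icc.2 Real.pi_pos.le)]
  apply Real.exp_lt_exp.2
  simpa only [Lam_zero, Complex.ofReal_re] using this

/-- On the upper edge of `Om` the map decreases up to the zero of `A s + B`, and it is nonpositive
from there on. -/
lemma edge_pi {u : ℝ} (h : U P Real.pi < u) :
    ∃ y : ℝ, Jc P (pt u Real.pi) = y ∧ y < X P Real.pi := by
  have hexp : ∀ v, U P Real.pi ≤ v → P.D < P.C * Real.exp v := by
    intro v hv
    refine (low' P).trans_le ?_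
    have := P.hC
    gcongr
  refine ⟨_, Jc_pi P (hexp u h.le), ?_⟩
  by_cases h2 : P.A * Real.exp u < P.B
  · have hexp2 : ∀ v, v ≤ u → P.A * Real.exp v < P.B := by
      intro v hv
      refine lt_of_le_of_lt ?_ h2
      have := P.hA
      gcongr
    have hd : ∀ v ∈ Icc (U P Real.pi) u, HasDerivAt (fun t => (Lam P (pt t Real.pi)).re)
        (dLam P (pt v Real.pi)).re v :=
      fun v hv => hasDerivAt_horiz P (good_pi P (hexp v hv.1) (hexp2 v hv.2))
    have anti : StrictAntiOn (fun t => (Lam P (pt t Real.pi)).re) (Icc (U P Real.pi) u) := by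
      apply strictAntiOn_of_deriv_neg (convex_Icc _ _)
      · exact fun v hv => (hd v hv).continuousAt.continuousWithinAt
      · intro v hv
        rw [interior_Icc] at hv
        have hv' := Ioo_subset_Icc_self hv
        rw [(hd v hv').deriv]
        exact dLam_pi_neg P (by rw [← U_pi]; exact hv.1) (hexp v hv'.1) (hexp2 v hv'.2)
    have := anti (left_mem_Icc.2 h.le) (right_mem_Icc.2 h.le) h
    have e := Jc_eq_exp P (good_pi P (hexp u h.le) h2).1
    rw [Jc_pi P (hexp u h.le), Lam_pi P (hexp u h.le) h2, ← Complex.ofReal_exp,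
      Complex.ofReal_inj] at e
    rw [e, X_eq P (right_mem_Icc.2 Real.pi_pos.le)]
    apply Real.exp_lt_exp.2
    simpa only [Lam_pi P (hexp u h.le) h2, Complex.ofReal_re] using this
  · refine lt_of_le_of_lt ?_ (X_pos P (right_mem_Icc.2 Real.pi_pos.le))
    have := Real.rpow_pos_of_pos (E2_pi_pos P (hexp u h.le)) P.p
    have : P.B - P.A * Real.exp u ≤ 0 := by linarith
    nlinarith

/-- `Im Lam` is positive to the right of the curve and stays below `π`. -/
lemma Jc_im_pos {w : ℂ} (h : w ∈ Om P) : 0 < (Jc P w).im := by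
  rw [Jc_eq_exp P (E1_slit_Om P h), Complex.exp_im]
  have h1 := Lam_im_lt P h.1 h.2.1
  have h2 : 0 < (Lam P w).im := by
    rw [← Lam_curve_im P (φ := w.im) ⟨h.1.le, h.2.1.le⟩]
    exact Lam_im_strictMono P h.1 h.2.1 h.2.2
  have := Real.sin_pos_of_pos_of_lt_pi h2 h1
  positivity

/-- At a boundary point of `Om` the map takes a real value `y`, which separates the values `X φ`
according to whether `φ` is below or above the height of the point. -/
lemma boundary {w : ℂ} (h0 : 0 ≤ w.im) (h1 : w.im ≤ Real.pi) (h2 : U P w.im ≤ w.re)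
    (hw : w ∉ Om P) : ∃ y : ℝ, Jc P w = y ∧
      ∀ φ ∈ Ioo 0 Real.pi, (φ < w.im → y < X P φ) ∧ (w.im < φ → X P φ < y) := by
  by_cases hc : w.re = U P w.im
  · have : w = pt (U P w.im) w.im := by rw [← hc]; rfl
    refine ⟨X P w.im, by rw [← Jc_curve P ⟨h0, h1⟩, ← this], fun φ hφ => ⟨fun h => ?_, fun h => ?_⟩⟩
    · exact strictAntiOn_X P (Ioo_subset_Icc_self hφ) ⟨h0, h1⟩ h
    · exact strictAntiOn_X P ⟨h0, h1⟩ (Ioo_subset_Icc_self hφ) h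
  have hlt : U P w.im < w.re := lt_of_le_of_ne h2 (Ne.symm hc)
  rcases h0.eq_or_lt with h0 | h0
  · rw [← h0] at hlt
    obtain ⟨y, hy, hy'⟩ := edge_zero P hlt
    refine ⟨y, by rw [← hy, h0]; rfl, fun φ hφ => ⟨fun h => by linarith [hφ.1], fun _ => ?_⟩⟩
    exact (strictAntiOn_X P (left_mem_Icc.2 Real.pi_pos.le) (Ioo_subset_Icc_self hφ) hφ.1).trans hy'
  rcases h1.eq_or_lt with h1 | h1
  · rw [h1] at hlt
    obtain ⟨y, hy, hy'⟩ := edge_pi P hlt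
    refine ⟨y, by rw [← hy, ← h1]; rfl, fun φ hφ => ⟨fun _ => ?_, fun h => by linarith [hφ.2]⟩⟩
    exact hy'.trans (strictAntiOn_X P (Ioo_subset_Icc_self hφ) (right_mem_Icc.2 Real.pi_pos.le) hφ.2)
  · exact absurd ⟨h0, h1, hlt⟩ hw

end EqMeas

/-! ### The holomorphic function measuring the defect -/

namespace EqMeas

open Filter Topology Set

variable (P : Par)

/-- The constant `κ = log (A C^p)`: the map is asymptotic to `e^κ s` as `s → ∞`. -/
noncomputable def kap : ℝ := Real.log P.A + P.p * Real.log P.C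

/-- The complex logarithmic potential of the image of `dφ/π` under `X`, for `z` in the upper half
plane. -/
noncomputable def Gc (z : ℂ) : ℂ :=
  ((Real.pi⁻¹ : ℝ) : ℂ) * ∫ φ in Ioo 0 Real.pi, Complex.log (z - X P φ)

/-- The difference between the potential along the map and its expected value `w + κ`. -/
noncomputable def fd (w : ℂ) : ℂ := Gc P (Jc P w) - w - kap P

lemma slit_sub {z : ℂ} (hz : 0 < z.im) (x : ℝ) : z - x ∈ Complex.slitPlane := by
  rw [Complex.mem_slitPlane_iff]; right; simpa using hz.ne'

lemma integrableOn_of_cont {E : Type*} [NormedAddCommGroup E] {g : ℝ → E}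
    (h : ContinuousOn g (Icc 0 Real.pi)) : IntegrableOn g (Ioo 0 Real.pi) :=
  (h.integrableOn_compact isCompact_Icc).mono_set Ioo_subset_Icc_self

lemma contOn_sub (z : ℂ) : ContinuousOn (fun φ => z - (X P φ : ℂ)) (Icc 0 Real.pi) :=
  continuousOn_const.sub (Complex.continuous_ofReal.comp_continuousOn (continuousOn_X P))

lemma contOn_log {z : ℂ} (hz : 0 < z.im) :
    ContinuousOn (fun φ => Complex.log (z - X P φ)) (Icc 0 Real.pi) :=
  (contOn_sub P z).clog fun _ _ => slit_sub hz _

lemma hasDerivAt_Gc {z : ℂ} (hz : 0 < z.im) : ∃ d, HasDerivAt (Gc P) d z := by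
  have key := hasDerivAt_integral_of_dominated_loc_of_deriv_le
    (μ := volume.restrict (Ioo 0 Real.pi)) (F := fun z φ => Complex.log (z - X P φ))
    (F' := fun z φ => 1 / (z - X P φ)) (x₀ := z) (s := {y | z.im / 2 < y.im})
    (bound := fun _ => 2 / z.im)
    ((isOpen_lt continuous_const Complex.continuous_im).mem_nhds (by simp; linarith))
    (by
      filter_upwards [(isOpen_lt continuous_const Complex.continuous_im).mem_nhds
        (show z ∈ {y | z.im / 2 < y.im} by simp; linarith)] with y hy
      have hy1 : z.im / 2 < y.im := hy
      have hy' : 0 < y.im := by linarith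
      exact (integrableOn_of_cont (contOn_log P hy')).aestronglyMeasurable)
    (integrableOn_of_cont (contOn_log P hz))
    (integrableOn_of_cont (continuousOn_const.div (contOn_sub P z)
      fun _ _ => Complex.slitPlane_ne_zero (slit_sub hz _))).aestronglyMeasurable
    (Eventually.of_forall fun φ y hy => by
      have hy' : z.im / 2 < y.im := hy
      have h1 : y.im ≤ ‖y - X P φ‖ := by
        have := Complex.abs_im_le_norm (y - X P φ)
        simp only [Complex.sub_im, Complex.ofReal_im, sub_zero] at this
        exact (le_abs_self _).trans this
      rw [norm_div, norm_one, div_le_div_iff₀ (by linarith) hz]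
      linarith)
    (integrable_const _)
    (Eventually.of_forall fun φ y hy => by
      have hy' : z.im / 2 < y.im := hy
      exact (((hasDerivAt_id y).sub_const _).clog (slit_sub (show 0 < (id y).im by simp only [id]; linarith) _)))
  exact ⟨_, key.2.const_mul _⟩

lemma differentiableAt_fd {w : ℂ} (hw : w ∈ Om P) : DifferentiableAt ℂ (fd P) w := by
  obtain ⟨d, hd⟩ := hasDerivAt_Gc P (Jc_im_pos P hw)
  obtain ⟨e, he⟩ := hasDerivAt_Jc P (E2_slit_Om P hw)
  exact (((hd.comp w he).sub (hasDerivAt_id w)).sub_const _).differentiableAt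

lemma fd_im {w : ℂ} (hw : w ∈ Om P) :
    (fd P w).im = Real.pi⁻¹ * (∫ φ in Ioo 0 Real.pi, (Jc P w - X P φ).arg) - w.im := by
  have h := integrableOn_of_cont (contOn_log P (Jc_im_pos P hw))
  have := Complex.imCLM.integral_comp_comm h
  simp only [Complex.imCLM_apply, Complex.log_im] at this
  simp [fd, Gc, this, -Complex.ofReal_inv]

lemma fd_re {w : ℂ} (hw : w ∈ Om P) :
    (fd P w).re = Real.pi⁻¹ * (∫ φ in Ioo 0 Real.pi, Real.log ‖Jc P w - X P φ‖) - w.re - kap P := by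
  have h := integrableOn_of_cont (contOn_log P (Jc_im_pos P hw))
  have := Complex.reCLM.integral_comp_comm h
  simp only [Complex.reCLM_apply, Complex.log_re] at this
  simp [fd, Gc, this, -Complex.ofReal_inv]

/-- At a boundary point of height `t`, the argument of `J − X φ` tends to `π` for `φ < t` and to `0` for
`φ > t`, by `boundary`; its mean over `(0, π)` tends to `t`. -/
lemma tendsto_boundary {w : ℂ} (h0 : 0 ≤ w.im) (h1 : w.im ≤ Real.pi) (h2 : U P w.im ≤ w.re)
    (hw : w ∉ Om P) : Tendsto (fun v => (fd P v).im) (𝓝[Om P] w) (𝓝 0) := by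
  obtain ⟨y, hy, hX⟩ := boundary P h0 h1 h2 hw
  have hJ : Tendsto (Jc P) (𝓝[Om P] w) (𝓝 (y : ℂ)) := by
    rw [← hy]
    exact (continuousAt_Jc P (E2_slit_Cl P h0 h1 h2)).tendsto.mono_left nhdsWithin_le_nhds
  have lim : Tendsto (fun v => ∫ φ in Ioo 0 Real.pi, (Jc P v - X P φ).arg) (𝓝[Om P] w)
      (𝓝 (∫ φ in Ioo 0 Real.pi, (Iio w.im).indicator (fun _ => Real.pi) φ)) := by
    refine tendsto_integral_filter_of_dominated_convergence (fun _ => Real.pi) ?_ ?_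
      (integrable_const _) ?_
    · filter_upwards [self_mem_nhdsWithin] with v hv
      have := (integrableOn_of_cont (contOn_log P (Jc_im_pos P hv))).aestronglyMeasurable
      have := Complex.continuous_im.comp_aestronglyMeasurable this
      simpa only [Complex.log_im] using this
    · exact Eventually.of_forall fun v => Eventually.of_forall fun φ => by
        rw [Real.norm_eq_abs]; exact Complex.abs_arg_le_pi _
    · have hne : ∀ᵐ φ ∂(volume.restrict (Ioo 0 Real.pi)), φ ≠ w.im := by
        apply ae_restrict_of_ae
        simp [ae_iff]
      filter_upwards [hne, ae_restrict_mem measurableSet_Ioo] with φ hφ hφI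
      have hsub : Tendsto (fun v => Jc P v - X P φ) (𝓝[Om P] w)
          (𝓝[{z | 0 ≤ z.im}] ((y - X P φ : ℝ) : ℂ)) := by
        apply tendsto_nhdsWithin_of_tendsto_nhds_of_eventually_within
        · push_cast; exact hJ.sub_const _
        · filter_upwards [self_mem_nhdsWithin] with v hv
          have := Jc_im_pos P hv
          simpa using this.le
      rcases lt_or_gt_of_ne hφ with h | h
      · rw [indicator_of_mem (show φ ∈ Iio w.im from h)]
        have := (hX φ hφI).1 h
        exact (Complex.tendsto_arg_nhdsWithin_im_nonneg_of_re_neg_of_im_zero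
          (by rw [Complex.ofReal_re]; linarith) (Complex.ofReal_im _)).comp hsub
      · rw [indicator_of_notMem (by simpa using h.le)]
        have := (hX φ hφI).2 h
        have e : ((y - X P φ : ℝ) : ℂ).arg = 0 := Complex.arg_ofReal_of_nonneg (by linarith)
        rw [← e]
        refine (Complex.continuousAt_arg ?_).tendsto.comp (hsub.mono_right nhdsWithin_le_nhds)
        rw [Complex.mem_slitPlane_iff]; left; rw [Complex.ofReal_re]; linarith
  have val : ∫ φ in Ioo 0 Real.pi, (Iio w.im).indicator (fun _ => Real.pi) φ = w.im * Real.pi := by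
    rw [setIntegral_indicator measurableSet_Iio, setIntegral_const]
    have : Ioo 0 Real.pi ∩ Iio w.im = Ioo 0 w.im := by
      ext t; simp only [mem_inter_iff, mem_Ioo, mem_Iio]
      constructor
      · rintro ⟨⟨a, b⟩, c⟩; exact ⟨a, c⟩
      · rintro ⟨a, b⟩; exact ⟨⟨a, b.trans_le h1⟩, b⟩
    rw [this]; simp [h0]
  rw [val] at lim
  have him : Tendsto (fun v : ℂ => v.im) (𝓝[Om P] w) (𝓝 w.im) :=
    (Complex.continuous_im.tendsto w).mono_left nhdsWithin_le_nhds
  have := (lim.const_mul Real.pi⁻¹).sub him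
  have e : Real.pi⁻¹ * (w.im * Real.pi) - w.im = 0 := by
    have := Real.pi_ne_zero; field_simp; ring
  rw [e] at this
  refine this.congr' ?_
  filter_upwards [self_mem_nhdsWithin] with v hv
  rw [fd_im P hv]

/-- For every `φ`, `(J(e^w) − X φ) e^(-w-κ) → 1` as `Re w → ∞`, uniformly in `φ`; the imaginary part of
`log (J − X φ) − w − κ` lies in `(-π, π)`, so this is the principal logarithm of that quotient. -/
lemma fd_infty {ε : ℝ} (hε : 0 < ε) : ∃ R, ∀ w ∈ Om P, R < w.re → ‖fd P w‖ ≤ ε := by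
  -- `log` is small near `1`
  have hlog : ∀ᶠ h in 𝓝 (1 : ℂ), ‖Complex.log h‖ < ε := by
    have : ContinuousAt (fun h => ‖Complex.log h‖) 1 :=
      (continuousAt_clog (by simp)).norm
    exact this.eventually_lt_const (by simpa using hε)
  obtain ⟨η, hη, hball⟩ := Metric.eventually_nhds_iff.1 hlog
  have hq : Tendsto (fun w : ℂ => Complex.exp (-w)) (comap Complex.re atTop) (𝓝 0) := by
    rw [tendsto_zero_iff_norm_tendsto_zero]
    simp only [Complex.norm_exp, Complex.neg_re]
    exact Real.tendsto_exp_neg_atTop_nhds_zero.comp tendsto_comap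
  set k : ℂ := Complex.exp (-(kap P : ℂ)) with hk
  have hC : (P.C : ℂ) ∈ Complex.slitPlane := by
    rw [Complex.mem_slitPlane_iff]; left; simpa using P.hC
  have hmain : Tendsto (fun w : ℂ => ‖(P.A + P.B * Complex.exp (-w)) *
      Complex.exp (P.p * Complex.log (P.C + P.D * Complex.exp (-w))) * k - 1‖ +
      X P 0 * ‖Complex.exp (-w)‖ * ‖k‖) (comap Complex.re atTop) (𝓝 0) := by
    have h1 : Tendsto (fun w : ℂ => (P.A : ℂ) + P.B * Complex.exp (-w)) (comap Complex.re atTop)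
        (𝓝 (P.A + P.B * 0)) := (hq.const_mul _).const_add _
    have h2 : Tendsto (fun w : ℂ => (P.C : ℂ) + P.D * Complex.exp (-w)) (comap Complex.re atTop)
        (𝓝 (P.C + P.D * 0)) := (hq.const_mul _).const_add _
    have h3 := ((h2.clog (by simpa using hC)).const_mul (P.p : ℂ)).cexp
    have h4 := (((h1.mul h3).mul_const k).sub_const 1).norm.add
      ((hq.norm.const_mul (X P 0)).mul_const ‖k‖)
    convert h4 using 2
    have : (P.A : ℂ) * Complex.exp (P.p * Complex.log P.C) * k = 1 := by
      have eA : (P.A : ℂ) = Complex.exp (Real.log P.A : ℝ) := by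
        rw [← Complex.ofReal_exp, Real.exp_log P.hA]
      rw [eA, hk, kap, ← Complex.ofReal_log P.hC.le, ← Complex.exp_add, ← Complex.exp_add]
      simp
    simp [this]
  have hev := hmain.eventually_lt_const hη
  rw [eventually_comap] at hev
  obtain ⟨R, hR⟩ := eventually_atTop.1 hev
  refine ⟨R, fun w hw hwR => ?_⟩
  have hb := hR w.re hwR.le w rfl
  have hJ := Jc_im_pos P hw
  have hterm : ∀ φ ∈ Ioo 0 Real.pi, ‖Complex.log (Jc P w - X P φ) - w - kap P‖ ≤ ε := by
    intro φ hφ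
    have hφ' := Ioo_subset_Icc_self hφ
    set L := Complex.log (Jc P w - X P φ) - w - kap P with hL
    have hne : Jc P w - X P φ ≠ 0 := Complex.slitPlane_ne_zero (slit_sub hJ _)
    have hexp : Complex.exp L = (P.A + P.B * Complex.exp (-w)) *
        Complex.exp (P.p * Complex.log (P.C + P.D * Complex.exp (-w))) * k
        - X P φ * Complex.exp (-w) * k := by
      have : L = Complex.log (Jc P w - X P φ) + (-w) + (-(kap P : ℂ)) := by rw [hL]; ring
      rw [this, Complex.exp_add, Complex.exp_add, Complex.exp_log hne, ← hk, Jc, E1, E2]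
      have e : Complex.exp w * Complex.exp (-w) = 1 := by rw [← Complex.exp_add]; simp
      linear_combination (P.A * Complex.exp (P.p * Complex.log (P.C + P.D * Complex.exp (-w))) * k) * e
    have him : L.im = (Jc P w - X P φ).arg - w.im := by simp [hL, Complex.log_im]
    have ha : 0 < (Jc P w - X P φ).arg := by
      have h0 : 0 ≤ (Jc P w - X P φ).arg := Complex.arg_nonneg_iff.2 (by simpa using hJ.le)
      refine lt_of_le_of_ne h0 fun h => ?_
      have := (Complex.arg_eq_zero_iff.1 h.symm).2
      simp at this
      exact hJ.ne' this
    have hLL : Complex.log (Complex.exp L) = L := by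
      apply Complex.log_exp
      · rw [him]; linarith [hw.2.1]
      · rw [him]; linarith [Complex.arg_le_pi (Jc P w - X P φ), hw.1]
    rw [← hLL]
    refine (hball ?_).le
    rw [dist_eq_norm, hexp, sub_right_comm]
    refine (norm_sub_le _ _).trans_lt (lt_of_le_of_lt ?_ hb)
    have hx : X P φ ≤ X P 0 :=
      (strictAntiOn_X P (left_mem_Icc.2 Real.pi_pos.le) hφ' hφ.1).le
    rw [norm_mul, norm_mul, Complex.norm_real, Real.norm_of_nonneg (X_pos P hφ').le]
    gcongr
  have hint := integrableOn_of_cont (contOn_log P hJ)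
  have hfd : fd P w = ((Real.pi⁻¹ : ℝ) : ℂ) *
      ∫ φ in Ioo 0 Real.pi, (Complex.log (Jc P w - X P φ) - w - kap P) := by
    have e : ∀ φ, Complex.log (Jc P w - X P φ) - w - kap P =
      Complex.log (Jc P w - X P φ) - (w + kap P) := fun φ => by ring
    simp only [e]
    rw [integral_sub hint (integrable_const _), setIntegral_const, mul_sub, fd, Gc]
    have : (Real.pi : ℂ) ≠ 0 := by exact_mod_cast Real.pi_ne_zero
    simp [Real.pi_pos.le]
    field_simp
    ring
  rw [hfd, norm_mul, Complex.norm_real, Real.norm_of_nonneg (by positivity)]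
  have := norm_setIntegral_le_of_norm_le_const (μ := volume) (s := Ioo 0 Real.pi) (by simp) hterm
  rw [Measure.real, Real.volume_Ioo, sub_zero, ENNReal.toReal_ofReal Real.pi_pos.le] at this
  have hpi := Real.pi_pos
  rw [inv_mul_le_iff₀ hpi]; linarith

end EqMeas

/-! ### The maximum principle -/

namespace EqMeas

open Filter Topology Set

variable (P : Par)

/-- The boundary values and the decay at infinity keep the level set away from the boundary and
from infinity. -/
lemma compact_level {F : ℂ → ℂ} (hF : ∀ w ∈ Om P, DifferentiableAt ℂ F w)
    (hb : ∀ w : ℂ, 0 ≤ w.im → w.im ≤ Real.pi → U P w.im ≤ w.re → w ∉ Om P →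
      Tendsto (fun v => (F v).im) (𝓝[Om P] w) (𝓝 0))
    (hinf : ∀ ε > 0, ∃ R, ∀ w ∈ Om P, R < w.re → ‖F w‖ ≤ ε) {η : ℝ} (hη : 0 < η) :
    IsCompact {w | w ∈ Om P ∧ η ≤ (F w).im} := by
  set K := {w | w ∈ Om P ∧ η ≤ (F w).im} with hK
  have hU := continuous_U P
  have hcl : IsClosed {w : ℂ | 0 ≤ w.im ∧ w.im ≤ Real.pi ∧ U P w.im ≤ w.re} :=
    (isClosed_le continuous_const Complex.continuous_im).inter
      ((isClosed_le Complex.continuous_im continuous_const).inter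
        (isClosed_le (hU.comp Complex.continuous_im) Complex.continuous_re))
  have hclosed : IsClosed K := by
    apply isClosed_of_closure_subset
    intro w hw
    have h1 : w ∈ {w : ℂ | 0 ≤ w.im ∧ w.im ≤ Real.pi ∧ U P w.im ≤ w.re} :=
      closure_minimal (fun v (hv : v ∈ K) =>
        show 0 ≤ v.im ∧ v.im ≤ Real.pi ∧ U P v.im ≤ v.re from
          ⟨hv.1.1.le, hv.1.2.1.le, hv.1.2.2.le⟩) hcl hw
    have hne := mem_closure_iff_nhdsWithin_neBot.1 hw
    have hge : ∀ᶠ v in 𝓝[K] w, η ≤ (F v).im := by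
      filter_upwards [self_mem_nhdsWithin] with v hv using hv.2
    by_cases hwO : w ∈ Om P
    · refine ⟨hwO, ?_⟩
      have : Tendsto (fun v => (F v).im) (𝓝[K] w) (𝓝 (F w).im) :=
        (Complex.continuous_im.continuousAt.comp (hF w hwO).continuousAt).tendsto.mono_left
          nhdsWithin_le_nhds
      exact ge_of_tendsto this hge
    · have := (hb w h1.1 h1.2.1 h1.2.2 hwO).mono_left (nhdsWithin_mono w (fun v (hv : v ∈ K) => hv.1))
      have := ge_of_tendsto this hge
      linarith
  obtain ⟨R, hR⟩ := hinf (η / 2) (by linarith)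
  obtain ⟨m, hm⟩ := isCompact_Icc.bddBelow_image (hU.continuousOn (s := Icc 0 Real.pi))
  refine (isCompact_Icc.reProdIm isCompact_Icc).of_isClosed_subset hclosed
    (s := Icc m R ×ℂ Icc 0 Real.pi) ?_
  intro w hw
  rw [Complex.mem_reProdIm]
  refine ⟨⟨?_, ?_⟩, hw.1.1.le, hw.1.2.1.le⟩
  · exact (hm (mem_image_of_mem _ ⟨hw.1.1.le, hw.1.2.1.le⟩)).trans hw.1.2.2.le
  · by_contra h
    have h1 := hR w hw.1 (not_le.1 h)
    have h2 := (le_abs_self _).trans (Complex.abs_im_le_norm (F w))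
    have := hw.2
    linarith

/-- A positive value of `Im F` would give a maximum of `Im F`, attained on a compact set. At the point
of this set furthest to the right, `|exp (-i F)| = exp (Im F)` has a local maximum, so it is locally
constant, and the maximum is also attained slightly further to the right. -/
lemma max_principle {F : ℂ → ℂ} (hF : ∀ w ∈ Om P, DifferentiableAt ℂ F w)
    (hb : ∀ w : ℂ, 0 ≤ w.im → w.im ≤ Real.pi → U P w.im ≤ w.re → w ∉ Om P →
      Tendsto (fun v => (F v).im) (𝓝[Om P] w) (𝓝 0))
    (hinf : ∀ ε > 0, ∃ R, ∀ w ∈ Om P, R < w.re → ‖F w‖ ≤ ε) :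
    ∀ w ∈ Om P, (F w).im ≤ 0 := by
  intro w0 hw0
  by_contra! hpos
  have hcontOn : ∀ η, ContinuousOn (fun w => (F w).im) {w | w ∈ Om P ∧ η ≤ (F w).im} :=
    fun η w hw => (Complex.continuous_im.continuousAt.comp
      (hF w hw.1).continuousAt).continuousWithinAt
  obtain ⟨w1, hw1, hmax⟩ := (compact_level P hF hb hinf hpos).exists_isMaxOn
    ⟨w0, hw0, le_rfl⟩ (hcontOn _)
  have hM : ∀ w ∈ Om P, (F w).im ≤ (F w1).im := by
    intro w hw
    rcases le_total (F w0).im (F w).im with h | h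
    · exact hmax ⟨hw, h⟩
    · exact h.trans hw1.2
  have hMpos : 0 < (F w1).im := hpos.trans_le hw1.2
  obtain ⟨w2, hw2, hmax2⟩ := (compact_level P hF hb hinf hMpos).exists_isMaxOn
    ⟨w1, hw1.1, le_rfl⟩ Complex.continuous_re.continuousOn
  have hOm := (isOpen_Om P).mem_nhds hw2.1
  have hnorm : ∀ w, ‖Complex.exp (-Complex.I * F w)‖ = Real.exp (F w).im := by
    intro w; rw [Complex.norm_exp]; simp
  have hloc := Complex.norm_eventually_eq_of_isLocalMax
    (f := fun w => Complex.exp (-Complex.I * F w)) (c := w2)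
    (by filter_upwards [hOm] with w hw using ((hF w hw).const_mul _).cexp)
    (by
      filter_upwards [hOm] with w hw
      simp only [Function.comp_apply, hnorm]
      exact Real.exp_le_exp.2 ((hM w hw).trans hw2.2))
  have ht : Tendsto (fun t : ℝ => w2 + (t : ℂ)) (𝓝[>] 0) (𝓝 w2) := by
    have : Continuous (fun t : ℝ => w2 + (t : ℂ)) := by fun_prop
    simpa using (this.tendsto 0).mono_left nhdsWithin_le_nhds
  obtain ⟨t, ⟨hte, htO⟩, htpos⟩ :=
    ((ht.eventually (hloc.and hOm)).and (self_mem_nhdsWithin)).exists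
  rw [hnorm, hnorm] at hte
  have := Real.exp_injective hte
  have := hmax2 (show w2 + (t : ℂ) ∈ _ from ⟨htO, by rw [this]; exact hw2.2⟩)
  simp at this
  exact absurd htpos (not_lt.2 this)

lemma fd_im_zero {w : ℂ} (hw : w ∈ Om P) : (fd P w).im = 0 := by
  apply le_antisymm
  · exact max_principle P (fun w hw => differentiableAt_fd P hw)
      (fun w h0 h1 h2 h3 => tendsto_boundary P h0 h1 h2 h3) (fun ε hε => fd_infty P hε) w hw
  · have := max_principle P (F := fun w => -fd P w) (fun w hw => (differentiableAt_fd P hw).neg)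
      (fun w h0 h1 h2 h3 => by simpa using (tendsto_boundary P h0 h1 h2 h3).neg)
      (fun ε hε => by simpa using fd_infty P hε) w hw
    simpa using this

/-- A holomorphic function with vanishing imaginary part has vanishing derivative, since
`Im (F' v) = 0` for `v = 1` and `v = i`. -/
lemma fd_deriv_zero {w : ℂ} (hw : w ∈ Om P) : HasDerivAt (fd P) 0 w := by
  have hd := (differentiableAt_fd P hw).hasDerivAt
  have key : ∀ v : ℂ, (deriv (fd P) w * v).im = 0 := by
    intro v
    have i1 : HasDerivAt (fun z : ℂ => w + z * v) v ((0 : ℝ) : ℂ) := by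
      simpa using ((hasDerivAt_id ((0 : ℝ) : ℂ)).mul_const v).const_add w
    have hd' : HasDerivAt (fd P) (deriv (fd P) w) (w + ((0 : ℝ) : ℂ) * v) := by simpa using hd
    have h1 := Complex.imCLM.hasFDerivAt.comp_hasDerivAt (0 : ℝ)
      ((hd'.comp ((0 : ℝ) : ℂ) i1).comp_ofReal)
    have hc : Tendsto (fun t : ℝ => w + (t : ℂ) * v) (𝓝 0) (𝓝 w) := by
      have : Continuous (fun t : ℝ => w + (t : ℂ) * v) := by fun_prop
      simpa using this.tendsto 0
    have h2 : HasDerivAt (fun _ : ℝ => (0 : ℝ)) (deriv (fd P) w * v).im 0 := by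
      refine h1.congr_of_eventuallyEq ?_
      filter_upwards [hc.eventually ((isOpen_Om P).mem_nhds hw)] with t ht
      exact (fd_im_zero P ht).symm
    exact h2.unique (hasDerivAt_const _ _)
  have e : deriv (fd P) w = 0 := by
    apply Complex.ext
    · simpa using key Complex.I
    · simpa using key 1
  rwa [e] at hd

/-- `fd` is constant along the horizontal ray to the right of `w`, and tends to `0` along it. -/
lemma fd_zero {w : ℂ} (hw : w ∈ Om P) : fd P w = 0 := by
  have hray : ∀ t : ℝ, 0 ≤ t → w + (t : ℂ) ∈ Om P := by
    intro t ht
    refine ⟨by simpa using hw.1, by simpa using hw.2.1, ?_⟩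
    have := hw.2.2
    simp; linarith
  have hder : ∀ t : ℝ, 0 ≤ t → HasDerivAt (fun t : ℝ => fd P (w + (t : ℂ))) 0 t := by
    intro t ht
    have i1 : HasDerivAt (fun z : ℂ => w + z) 1 (t : ℂ) := (hasDerivAt_id (t : ℂ)).const_add w
    simpa using ((fd_deriv_zero P (hray t ht)).comp (t : ℂ) i1).comp_ofReal
  have hconst : ∀ t : ℝ, 0 ≤ t → fd P (w + (t : ℂ)) = fd P w := by
    intro t ht
    have := constant_of_has_deriv_right_zero (a := 0) (b := t)
      (fun s hs => (hder s hs.1).continuousAt.continuousWithinAt)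
      (fun s hs => (hder s hs.1).hasDerivWithinAt) t (right_mem_Icc.2 ht)
    simpa using this
  rw [← norm_le_zero_iff]
  refine le_of_forall_pos_le_add fun ε hε => ?_
  obtain ⟨R, hR⟩ := fd_infty P hε
  have ht : 0 ≤ |R - w.re| + 1 := by positivity
  rw [zero_add, ← hconst _ ht]
  apply hR _ (hray _ ht)
  have := le_abs_self (R - w.re)
  simp only [Complex.add_re, Complex.ofReal_re]
  linarith

end EqMeas

/-! ### The logarithmic potential on the support -/

namespace EqMeas

open Filter Topology Set

variable (P : Par)

/-- Every boundary point strictly to the right of the curve is a limit of points of `Om`. -/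
lemma frequently_Om {v : ℂ} (h : v.im ∈ Icc 0 Real.pi) (hU : U P v.im < v.re) :
    ∃ᶠ w in 𝓝 v, w ∈ Om P := by
  have hne : (𝓝[Ioo 0 Real.pi] v.im).NeBot := by
    rw [← mem_closure_iff_nhdsWithin_neBot, closure_Ioo Real.pi_pos.ne]; exact h
  have ht : Tendsto (fun t : ℝ => pt v.re t) (𝓝[Ioo 0 Real.pi] v.im) (𝓝 v) := by
    have : Continuous (fun t : ℝ => pt v.re t) := by fun_prop
    have := this.tendsto v.im
    rw [pt_eta] at this
    exact this.mono_left nhdsWithin_le_nhds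
  refine ht.frequently (Eventually.frequently ?_)
  have hc : ∀ᶠ t in 𝓝[Ioo 0 Real.pi] v.im, U P t < v.re :=
    ((continuous_U P).continuousAt.eventually_lt_const hU).filter_mono nhdsWithin_le_nhds
  filter_upwards [hc, self_mem_nhdsWithin] with t h1 h2
  exact ⟨h2.1, h2.2, h1⟩

/-- `Lam` is a local homeomorphism at the curve point, so there are points of the strip where the map
takes a value `X φ + i ε` with small `ε > 0`; they lie in `Om` because `Im Lam > 0` there. -/
lemma approx_interior {φ : ℝ} (h : φ ∈ Ioo 0 Real.pi) {V : Set ℂ} (hV : V ∈ 𝓝 (pt (U P φ) φ)) :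
    ∃ w ∈ Om P, w ∈ V ∧ (Jc P w).re = X P φ := by
  set γ := pt (U P φ) φ with hγ
  have hc := Ioo_subset_Icc_self h
  set S : Set ℂ := {w | 0 < w.im ∧ w.im < Real.pi} with hS
  have hSo : IsOpen S := (isOpen_lt continuous_const Complex.continuous_im).inter
    (isOpen_lt Complex.continuous_im continuous_const)
  have hSγ : S ∈ 𝓝 γ := hSo.mem_nhds ⟨h.1, h.2⟩
  have hd : ∀ w ∈ S, HasDerivAt (Lam P) (dLam P w) w := fun w hw =>
    hasDerivAt_Lam P (E1_slit' P hw.1.le hw.2) (E2_slit' P hw.1.le hw.2)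
  have hstrict : HasStrictDerivAt (Lam P) (dLam P γ) γ := by
    have han : AnalyticAt ℂ (Lam P) γ := DifferentiableOn.analyticAt
      (fun w hw => (hd w hw).differentiableAt.differentiableWithinAt) hSγ
    have := han.hasStrictDerivAt
    rwa [(hd γ ⟨h.1, h.2⟩).deriv] at this
  have hne : dLam P γ ≠ 0 := fun h0 => by
    have := dLam_im_pos P (w := γ) h.1 h.2
    rw [h0] at this; simp at this
  have hmap := hstrict.map_nhds_eq hne
  have hXpos := X_pos P hc
  have hval : Complex.log (X P φ : ℂ) = Lam P γ := by
    rw [X_eq P hc, ← Complex.ofReal_log (Real.exp_pos _).le, Real.log_exp, ← Lam_curve P hc]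
  -- the image of a neighbourhood of the curve point contains `log (X + i ε)`
  have him : Lam P '' (V ∩ S) ∈ 𝓝 (Complex.log (X P φ : ℂ)) := by
    rw [hval, ← hmap]; exact image_mem_map (inter_mem hV hSγ)
  have ht : Tendsto (fun ε : ℝ => Complex.log ((X P φ : ℂ) + ε * Complex.I)) (𝓝[>] 0)
      (𝓝 (Complex.log (X P φ : ℂ))) := by
    have c1 : ContinuousAt (fun ε : ℝ => (X P φ : ℂ) + ε * Complex.I) 0 := by fun_prop
    have c2 := c1.clog (by
      rw [Complex.mem_slitPlane_iff]; left; simpa using hXpos)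
    have := c2.tendsto
    simp only [Complex.ofReal_zero, zero_mul, add_zero] at this
    exact this.mono_left nhdsWithin_le_nhds
  obtain ⟨ε, ⟨w, ⟨hwV, hwS⟩, hw⟩, hε⟩ := ((ht.eventually him).and self_mem_nhdsWithin).exists
  have hε : 0 < ε := hε
  have hz : (X P φ : ℂ) + ε * Complex.I ≠ 0 := fun h0 => by
    have := congrArg Complex.re h0
    simp at this; exact hXpos.ne' this
  have hJ : Jc P w = (X P φ : ℂ) + ε * Complex.I := by
    rw [Jc_eq_exp P (E1_slit' P hwS.1.le hwS.2), hw, Complex.exp_log hz]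
  refine ⟨w, ⟨hwS.1, hwS.2, ?_⟩, hwV, by simp [hJ]⟩
  have harg : 0 < (Lam P w).im := by
    rw [hw, Complex.log_im]
    refine lt_of_le_of_ne (Complex.arg_nonneg_iff.2 (by simpa using hε.le)) fun h0 => ?_
    have := (Complex.arg_eq_zero_iff.1 h0.symm).2
    simp at this; exact hε.ne' this
  rw [← Lam_curve_im P (φ := w.im) ⟨hwS.1.le, hwS.2.le⟩] at harg
  exact (Lam_im_strictMono P hwS.1 hwS.2).lt_iff_lt.1 harg

/-- Approach of a curve point from inside `Om` along which `|J(e^w) − X ψ|` is bounded below by its limit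
`|X φ − X ψ|`, so that dominated convergence applies to the logarithm. At the two end points of the
curve one takes points near the adjacent edge, where `J` lies outside the range of `X`. -/
lemma approx {φ : ℝ} (h : φ ∈ Icc 0 Real.pi) {V : Set ℂ} (hV : V ∈ 𝓝 (pt (U P φ) φ)) :
    ∃ w ∈ Om P, w ∈ V ∧ ∀ ψ ∈ Icc 0 Real.pi, |X P ψ - X P φ| ≤ ‖Jc P w - X P ψ‖ := by
  have hright : ∃ u, U P φ < u ∧ V ∈ 𝓝 (pt u φ) := by
    obtain ⟨W, hWV, hWo, hWm⟩ := mem_nhds_iff.1 hV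
    have ht : Tendsto (fun u : ℝ => pt u φ) (𝓝[>] (U P φ)) (𝓝 (pt (U P φ) φ)) := by
      have : Continuous (fun u : ℝ => pt u φ) := by fun_prop
      exact (this.tendsto _).mono_left nhdsWithin_le_nhds
    obtain ⟨u, hu, hu'⟩ := ((ht.eventually (hWo.mem_nhds hWm)).and self_mem_nhdsWithin).exists
    exact ⟨u, hu', mem_of_superset (hWo.mem_nhds hu) hWV⟩
  have hre : ∀ w ψ, |(Jc P w).re - X P ψ| ≤ ‖Jc P w - X P ψ‖ := fun w ψ => by
    simpa using Complex.abs_re_le_norm (Jc P w - X P ψ)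
  rcases h.1.eq_or_lt with h0 | h0
  · obtain ⟨u, hu, hVu⟩ := hright
    subst h0
    obtain ⟨y, hy, hXy⟩ := edge_zero P hu
    have hcont := continuousAt_Jc P (E2_slit_Cl P (w := pt u 0) le_rfl Real.pi_pos.le hu.le)
    have hev : ∀ᶠ w in 𝓝 (pt u 0), X P 0 < (Jc P w).re :=
      (Complex.continuous_re.continuousAt.comp hcont).eventually_const_lt (by simpa [hy] using hXy)
    obtain ⟨w, hwO, hw, hwV⟩ :=
      ((frequently_Om P (v := pt u 0) h hu).and_eventually (hev.and hVu)).exists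
    refine ⟨w, hwO, hwV, fun ψ hψ => le_trans ?_ (hre w ψ)⟩
    have := (strictAntiOn_X P).antitoneOn h hψ hψ.1
    rw [abs_sub_comm, abs_of_nonneg (by linarith)]
    exact le_trans (by linarith) (le_abs_self _)
  rcases h.2.eq_or_lt with h1 | h1
  · obtain ⟨u, hu, hVu⟩ := hright
    subst h1
    obtain ⟨y, hy, hXy⟩ := edge_pi P hu
    have hcont := continuousAt_Jc P (E2_slit_Cl P (w := pt u Real.pi) Real.pi_pos.le le_rfl hu.le)
    have hev : ∀ᶠ w in 𝓝 (pt u Real.pi), (Jc P w).re < X P Real.pi :=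
      (Complex.continuous_re.continuousAt.comp hcont).eventually_lt_const (by simpa [hy] using hXy)
    obtain ⟨w, hwO, hw, hwV⟩ :=
      ((frequently_Om P (v := pt u Real.pi) h hu).and_eventually (hev.and hVu)).exists
    refine ⟨w, hwO, hwV, fun ψ hψ => le_trans ?_ (hre w ψ)⟩
    have := (strictAntiOn_X P).antitoneOn hψ h hψ.2
    rw [abs_of_nonneg (by linarith)]
    exact le_trans (by linarith) (neg_le_abs _)
  · obtain ⟨w, hwO, hwV, hw⟩ := approx_interior P ⟨h0, h1⟩ hV
    refine ⟨w, hwO, hwV, fun ψ hψ => ?_⟩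
    rw [abs_sub_comm, ← hw]; exact hre w ψ

/-- The logarithmic potential at a point of the support, including the integrability that makes
the integral meaningful. It is the limit of `Re fd = 0` along the approach of `approx`: Fatou's lemma
gives integrability, and dominated convergence then gives the value. -/
lemma potential {φ : ℝ} (h : φ ∈ Icc 0 Real.pi) :
    IntegrableOn (fun ψ => Real.log |X P ψ - X P φ|) (Ioo 0 Real.pi) ∧
    ∫ ψ in Ioo 0 Real.pi, Real.log |X P ψ - X P φ| = Real.pi * (U P φ + kap P) := by
  set γ := pt (U P φ) φ with hγ
  have hcont : ContinuousAt (Jc P) γ := continuousAt_Jc P (good_curve P h).2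
  have hbd : ∀ᶠ w in 𝓝 γ, ‖Jc P w‖ < ‖Jc P γ‖ + 1 :=
    hcont.norm.eventually_lt_const (by linarith)
  choose w hwO hwV hw using fun n : ℕ =>
    approx P h (inter_mem (Metric.ball_mem_nhds γ (Nat.one_div_pos_of_nat (α := ℝ) (n := n))) hbd)
  have hlim : Tendsto w atTop (𝓝 γ) := by
    rw [tendsto_iff_dist_tendsto_zero]
    exact squeeze_zero (fun _ => dist_nonneg) (fun n => (hwV n).1.le)
      tendsto_one_div_add_atTop_nhds_zero_nat
  have hJ : Tendsto (fun n => Jc P (w n)) atTop (𝓝 (X P φ : ℂ)) := by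
    rw [← Jc_curve P h]; exact hcont.tendsto.comp hlim
  set K := ‖Jc P γ‖ + 1 + X P 0 with hK
  have hX0 : ∀ ψ ∈ Icc 0 Real.pi, X P ψ ≤ X P 0 := fun ψ hψ =>
    (strictAntiOn_X P).antitoneOn (left_mem_Icc.2 Real.pi_pos.le) hψ hψ.1
  have hnle : ∀ n, ∀ ψ ∈ Icc 0 Real.pi, ‖Jc P (w n) - X P ψ‖ ≤ K := fun n ψ hψ => by
    refine (norm_sub_le _ _).trans ?_
    have h1 : ‖Jc P (w n)‖ < ‖Jc P γ‖ + 1 := (hwV n).2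
    rw [Complex.norm_real, Real.norm_of_nonneg (X_pos P hψ).le]
    have := hX0 ψ hψ
    linarith
  have hnpos : ∀ n ψ, 0 < ‖Jc P (w n) - X P ψ‖ := fun n ψ =>
    norm_pos_iff.2 (Complex.slitPlane_ne_zero (slit_sub (Jc_im_pos P (hwO n)) _))
  set M := Real.log K with hM
  set H : ℕ → ℝ → ℝ := fun n ψ => Real.log ‖Jc P (w n) - X P ψ‖ with hH
  have hHM : ∀ n, ∀ ψ ∈ Icc 0 Real.pi, H n ψ ≤ M := fun n ψ hψ =>
    Real.log_le_log (hnpos n ψ) (hnle n ψ hψ)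
  have hHint : ∀ n, IntegrableOn (H n) (Ioo 0 Real.pi) := fun n =>
    integrableOn_of_cont ((contOn_sub P _).norm.log fun ψ _ => (hnpos n ψ).ne')
  have hHval : ∀ n, ∫ ψ in Ioo 0 Real.pi, H n ψ = Real.pi * ((w n).re + kap P) := fun n => by
    have h1 := fd_re P (hwO n)
    rw [fd_zero P (hwO n), Complex.zero_re] at h1
    have := Real.pi_pos
    have e : Real.pi⁻¹ * ∫ ψ in Ioo 0 Real.pi, H n ψ = (w n).re + kap P := by linarith
    rw [← e]; field_simp
  have hre : Tendsto (fun n => Real.pi * ((w n).re + kap P)) atTop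
      (𝓝 (Real.pi * (U P φ + kap P))) := by
    have := (Complex.continuous_re.tendsto γ).comp hlim
    exact (this.add_const _).const_mul _
  have hae : ∀ᵐ ψ ∂(volume.restrict (Ioo 0 Real.pi)), ψ ∈ Icc 0 Real.pi ∧ X P ψ ≠ X P φ := by
    have hne : ∀ᵐ ψ ∂(volume.restrict (Ioo 0 Real.pi)), ψ ≠ φ := by
      apply ae_restrict_of_ae
      simp [ae_iff]
    filter_upwards [hne, ae_restrict_mem measurableSet_Ioo] with ψ h1 h2
    exact ⟨Ioo_subset_Icc_self h2, fun e =>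
      h1 ((strictAntiOn_X P).injOn (Ioo_subset_Icc_self h2) h e)⟩
  have hptw : ∀ᵐ ψ ∂(volume.restrict (Ioo 0 Real.pi)),
      Tendsto (fun n => H n ψ) atTop (𝓝 (Real.log |X P ψ - X P φ|)) := by
    filter_upwards [hae] with ψ hψ
    have h1 := (hJ.sub_const (X P ψ : ℂ)).norm
    rw [← Complex.ofReal_sub, Complex.norm_real, Real.norm_eq_abs, abs_sub_comm] at h1
    exact h1.log (abs_ne_zero.2 (sub_ne_zero.2 hψ.2))
  have hint : IntegrableOn (fun ψ => M - Real.log |X P ψ - X P φ|) (Ioo 0 Real.pi) := by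
    refine integrable_of_tendsto (G := fun n ψ => M - H n ψ) ?_
      (fun n => ((integrable_const _).sub (hHint n)).aestronglyMeasurable) ?_
    · filter_upwards [hptw] with ψ hψ using hψ.const_sub M
    · have e : ∀ n, ∫⁻ ψ in Ioo 0 Real.pi, ‖M - H n ψ‖ₑ =
          ENNReal.ofReal (Real.pi * M - Real.pi * ((w n).re + kap P)) := by
        intro n
        have h1 : Integrable (fun ψ => M - H n ψ) (volume.restrict (Ioo 0 Real.pi)) :=
          (integrable_const _).sub (hHint n)
        rw [← hHval n]
        have h2 : ∫ ψ in Ioo 0 Real.pi, (M - H n ψ) =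
            Real.pi * M - ∫ ψ in Ioo 0 Real.pi, H n ψ := by
          rw [integral_sub (integrable_const _) (hHint n), setIntegral_const]
          simp [Real.pi_pos.le]
        rw [← h2, ofReal_integral_eq_lintegral_ofReal h1]
        · refine setLIntegral_congr_fun measurableSet_Ioo fun ψ hψ => ?_
          exact Real.enorm_of_nonneg (sub_nonneg.2 (hHM n ψ (Ioo_subset_Icc_self hψ)))
        · filter_upwards [hae] with ψ hψ using sub_nonneg.2 (hHM n ψ hψ.1)
      simp only [e]
      have := (ENNReal.continuous_ofReal.tendsto _).comp (hre.const_sub (Real.pi * M))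
      rw [Function.comp_def] at this
      rw [this.liminf_eq]; exact ENNReal.ofReal_ne_top
  have hint' : IntegrableOn (fun ψ => Real.log |X P ψ - X P φ|) (Ioo 0 Real.pi) := by
    have := (integrable_const M).sub hint
    refine this.congr (Eventually.of_forall fun ψ => ?_)
    simp only [Pi.sub_apply, sub_sub_cancel]
  refine ⟨hint', ?_⟩
  refine tendsto_nhds_unique ?_ hre
  simp only [← hHval]
  refine tendsto_integral_of_dominated_convergence
    (fun ψ => |(Real.log |X P ψ - X P φ|)| + |M|) (fun n => (hHint n).aestronglyMeasurable)
    (hint'.norm.add (integrable_const _)) (fun n => ?_) hptw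
  filter_upwards [hae] with ψ hψ
  have h1 := hHM n ψ hψ.1
  have h2 : Real.log |X P ψ - X P φ| ≤ H n ψ :=
    Real.log_le_log (abs_pos.2 (sub_ne_zero.2 hψ.2)) (hw n ψ hψ.1)
  rw [Real.norm_eq_abs, abs_le]
  constructor
  · linarith [neg_abs_le (Real.log |X P ψ - X P φ|), abs_nonneg M]
  · linarith [le_abs_self M, abs_nonneg (Real.log |X P ψ - X P φ|)]

end EqMeas

/-! ### Duality and the constant -/

namespace EqMeas

open Filter Topology Set

/-- What the argument uses about `s_b = sb`, `s_a = -ra` and the coefficients: `sb` and `-ra` are the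
critical points of `J`, `s_a` lies between `-c0/c1` and `-1`, and `J(s_a) < J(s_b)`. -/
structure Good (θ c0 c1 sb ra : ℝ) : Prop where
  hθ : 0 < θ
  hc0 : 0 < c0
  hc1 : 0 < c1
  hsb : 0 < sb
  hra : 1 < ra
  high : c1 * ra < c0
  sum : θ * (sb - ra) = 1 - θ
  prod : θ * c1 * (sb * ra) = c0
  lt : (c0 - c1 * ra) * (1 - 1 / ra) ^ (1 / θ) < (c1 * sb + c0) * (1 + 1 / sb) ^ (1 / θ)

variable {θ c0 c1 sb ra : ℝ}

lemma rpow_aux (hθ : 0 < θ) {x y : ℝ} (hx : 0 ≤ x) (hy : 0 ≤ y) :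
    (x * y ^ (1 / θ)) ^ θ = y * x ^ θ := by
  rw [Real.mul_rpow hx (Real.rpow_nonneg hy _), ← Real.rpow_mul hy, one_div_mul_cancel hθ.ne',
    Real.rpow_one, mul_comm]

/-- The map `J(s) = (c1 s + c0)(1 + 1/s)^(1/θ)`. -/
noncomputable def par1 (h : Good θ c0 c1 sb ra) : Par where
  A := c1
  B := c0
  C := 1
  D := 1
  p := 1 / θ
  sb := sb
  ra := ra
  hA := h.hc1
  hB := h.hc0
  hC := one_pos
  hD := one_pos
  hp := one_div_pos.2 h.hθ
  hsb := h.hsb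
  hra := by linarith [h.hra]
  sum := by
    have := h.hθ.ne'
    field_simp
    linarith [h.sum]
  prod := by
    have := h.hθ.ne'
    field_simp
    linarith [h.prod]
  low := by linarith [h.hra]
  high := h.high
  lt := h.lt

/-- The map `J^θ` in the variable `1/s`, that is `s ↦ (s + 1)(c0 + c1/s)^θ`. -/
noncomputable def par2 (h : Good θ c0 c1 sb ra) : Par where
  A := 1
  B := 1
  C := c0
  D := c1
  p := θ
  sb := 1 / sb
  ra := 1 / ra
  hA := one_pos
  hB := one_pos
  hC := h.hc0
  hD := h.hc1
  hp := h.hθ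
  hsb := one_div_pos.2 h.hsb
  hra := one_div_pos.2 (by linarith [h.hra])
  sum := by
    have h1 := h.hsb.ne'
    have h2 : ra ≠ 0 := by linarith [h.hra]
    have e1 := h.sum
    have e2 := h.prod
    field_simp
    linear_combination c1 * (sb * ra) * e1 - (sb - ra) * e2
  prod := by
    have h1 := h.hsb.ne'
    have h2 : ra ≠ 0 := by linarith [h.hra]
    have e2 := h.prod
    field_simp
    linarith
  low := by
    have h2 : 0 < ra := by linarith [h.hra]
    rw [mul_one_div, lt_div_iff₀ h2]; exact h.high
  high := by
    have h2 : 0 < ra := by linarith [h.hra]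
    rw [one_mul, div_lt_one h2]; exact h.hra
  lt := by
    have h1 := h.hsb
    have h2 : 0 < ra := by linarith [h.hra]
    have h3 : 0 < 1 - 1 / ra := by
      rw [sub_pos, div_lt_one h2]; exact h.hra
    have h4 := h.hc0
    have h5 := h.hc1
    have h6 := h.high
    have := Real.rpow_lt_rpow
      (mul_nonneg (by linarith) (Real.rpow_nonneg h3.le _)) h.lt h.hθ
    rw [rpow_aux h.hθ (by linarith) h3.le, rpow_aux h.hθ (by positivity) (by positivity)] at this
    simpa [add_comm] using this

variable (h : Good θ c0 c1 sb ra)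

/-- The substitution `s ↦ 1/s` sends the strip to its mirror image; the conjugation brings it back. -/
lemma Lam_dual {u φ : ℝ} (h1 : E1 (par1 h) (pt u φ) ∈ Complex.slitPlane)
    (h2 : E2 (par1 h) (pt u φ) ∈ Complex.slitPlane) :
    Lam (par2 h) (pt (-u) φ) = θ * starRingEnd ℂ (Lam (par1 h) (pt u φ)) := by
  have hp : -pt u φ = starRingEnd ℂ (pt (-u) φ) := by apply Complex.ext <;> simp
  have hq : -pt (-u) φ = starRingEnd ℂ (pt u φ) := by apply Complex.ext <;> simp
  have e1 : E1 (par2 h) (pt (-u) φ) = starRingEnd ℂ (E2 (par1 h) (pt u φ)) := by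
    simp only [E1, E2, par1, par2, hp, map_add, map_mul, ← Complex.exp_conj, Complex.conj_conj,
      Complex.conj_ofReal]
    ring
  have e2 : E2 (par2 h) (pt (-u) φ) = starRingEnd ℂ (E1 (par1 h) (pt u φ)) := by
    simp only [E1, E2, par1, par2, hq, map_add, map_mul, ← Complex.exp_conj, Complex.conj_ofReal]
    ring
  have hθ : (θ : ℂ) ≠ 0 := by exact_mod_cast h.hθ.ne'
  rw [Lam, e1, e2, Complex.log_conj _ (Complex.slitPlane_arg_ne_pi h2),
    Complex.log_conj _ (Complex.slitPlane_arg_ne_pi h1), Lam]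
  simp only [map_add, map_mul, Complex.conj_ofReal]
  have p1 : (par1 h).p = 1 / θ := rfl
  have p2 : (par2 h).p = θ := rfl
  rw [p1, p2]
  push_cast
  field_simp
  ring

lemma U_dual {φ : ℝ} (hφ : φ ∈ Icc 0 Real.pi) : U (par2 h) φ = -U (par1 h) φ := by
  rcases hφ.1.eq_or_lt with h0 | h0
  · rw [← h0, U_zero, U_zero]
    show Real.log (1 / sb) = -Real.log sb
    rw [one_div, Real.log_inv]
  rcases hφ.2.eq_or_lt with h1 | h1
  · rw [h1, U_pi, U_pi]
    show Real.log (1 / ra) = -Real.log ra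
    rw [one_div, Real.log_inv]
  apply (Lam_im_strictMono (par2 h) h0 h1).injective
  have g := good_curve (par1 h) hφ
  have e := congrArg Complex.im (Lam_dual h g.1 g.2)
  rw [Lam_curve (par1 h) hφ, Complex.conj_ofReal, ← Complex.ofReal_mul, Complex.ofReal_im] at e
  simp only [e, Lam_curve_im (par2 h) hφ]

lemma X_dual {φ : ℝ} (hφ : φ ∈ Icc 0 Real.pi) : X (par2 h) φ = X (par1 h) φ ^ θ := by
  have g := good_curve (par1 h) hφ
  rw [X_eq _ hφ, X_eq _ hφ, U_dual h hφ, Lam_dual h g.1 g.2, Lam_curve (par1 h) hφ,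
    Complex.conj_ofReal, ← Complex.ofReal_mul, Complex.ofReal_re, Complex.ofReal_re, mul_comm,
    Real.exp_mul]

lemma kap_one : kap (par1 h) = Real.log c1 := by simp [kap, par1]
lemma kap_two : kap (par2 h) = θ * Real.log c0 := by simp [kap, par2]

/-- Joint integrability of the logarithmic kernel. The kernel is bounded above, so the integral of
its absolute value in the first variable is controlled by the integral of the kernel itself, which
is bounded by `potential`. Nothing is assumed on the potential of `μ`. -/
lemma integrable_kernel (P : Par) {f : ℝ → ℝ} (hf : Measurable f) (μ : Measure ℝ)
    [IsProbabilityMeasure μ] (hμ : ∀ᵐ y ∂μ, ∃ ψ ∈ Icc 0 Real.pi, f y = X P ψ) :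
    Integrable (fun q : ℝ × ℝ => Real.log |X P q.1 - f q.2|)
      ((volume.restrict (Ioo 0 Real.pi)).prod μ) := by
  have hX : AEStronglyMeasurable (X P) (volume.restrict (Ioo 0 Real.pi)) :=
    (integrableOn_of_cont (continuousOn_X P)).aestronglyMeasurable
  have hmeas : AEStronglyMeasurable (fun q : ℝ × ℝ => Real.log |X P q.1 - f q.2|)
      ((volume.restrict (Ioo 0 Real.pi)).prod μ) := by
    have h1 : AEMeasurable (fun q : ℝ × ℝ => X P q.1 - f q.2)
        ((volume.restrict (Ioo 0 Real.pi)).prod μ) :=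
      hX.comp_fst.aemeasurable.sub (hf.comp measurable_snd).aemeasurable
    have h2 : (fun q : ℝ × ℝ => Real.log |X P q.1 - f q.2|) =
        fun q => Real.log (X P q.1 - f q.2) := by
      funext q; exact Real.log_abs _
    rw [h2]
    exact (Real.measurable_log.comp_aemeasurable h1).aestronglyMeasurable
  rw [integrable_prod_iff' hmeas]
  constructor
  · filter_upwards [hμ] with y ⟨ψ, hψ, hy⟩
    simp only [hy]
    exact (potential P hψ).1
  obtain ⟨K, hK⟩ := isCompact_Icc.exists_bound_of_continuousOn
    ((continuous_U P).continuousOn (s := Icc 0 Real.pi))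
  set M := max (Real.log (X P 0)) 0 with hM
  have hpi := Real.pi_pos
  refine Integrable.of_bound (hmeas.norm.prod_swap.integral_prod_right')
    (Real.pi * (2 * M + K + |kap P|)) ?_
  filter_upwards [hμ] with y ⟨ψ, hψ, hy⟩
  have hg := (potential P hψ).1
  simp only [hy]
  rw [Real.norm_of_nonneg (integral_nonneg fun _ => norm_nonneg _)]
  -- `|t| ≤ 2 * M - t` as soon as `t ≤ M` and `0 ≤ M`
  have hle : ∫ φ in Ioo 0 Real.pi, ‖Real.log |X P φ - X P ψ|‖ ≤
      ∫ φ in Ioo 0 Real.pi, (2 * M - Real.log |X P φ - X P ψ|) := by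
    refine setIntegral_mono_on hg.norm ((integrable_const _).sub hg) measurableSet_Ioo ?_
    intro φ hφ
    have hφ := Ioo_subset_Icc_self hφ
    have m0 : (0 : ℝ) ∈ Icc 0 Real.pi := left_mem_Icc.2 hpi.le
    have x1 := (strictAntiOn_X P).antitoneOn m0 hφ hφ.1
    have x2 := (strictAntiOn_X P).antitoneOn m0 hψ hψ.1
    have x3 := X_pos P hφ
    have x4 := X_pos P hψ
    have hM0 : 0 ≤ M := le_max_right _ _
    have hMl : Real.log |X P φ - X P ψ| ≤ M := by
      rcases (abs_nonneg (X P φ - X P ψ)).eq_or_lt with e | e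
      · rw [← e, Real.log_zero]; exact hM0
      · refine (Real.log_le_log e ?_).trans (le_max_left _ _)
        rw [abs_le]; constructor <;> linarith
    rw [Real.norm_eq_abs, abs_le]; constructor <;> linarith
  refine hle.trans ?_
  rw [integral_sub (integrable_const _) hg, (potential P hψ).2, setIntegral_const]
  simp only [Measure.real, Real.volume_Ioo, sub_zero, ENNReal.toReal_ofReal hpi.le, smul_eq_mul]
  rw [← mul_sub]
  have := hK ψ hψ
  rw [Real.norm_eq_abs, abs_le] at this
  have := neg_abs_le (kap P)
  gcongr
  linarith

/-- The explicit formulas for `s_a` and `s_b` give the critical point equations, and `c1 < c0` and `θ > 0`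
give the inequalities `1 < -s_a < c0 / c1`. -/
theorem good_of {θ a b c0 c1 : ℝ} (hθ : 0 < θ) (hab : a < b) (hc1 : 0 < c1) (hc01 : c1 < c0)
    (hJa : Jmap θ c0 c1 (sA θ (c0 / c1)) = a) (hJb : Jmap θ c0 c1 (sB θ (c0 / c1)) = b) :
    ∃ h : Good θ c0 c1 (sB θ (c0 / c1)) (-sA θ (c0 / c1)),
      X (par1 h) 0 = b ∧ X (par1 h) Real.pi = a := by
  set r := c0 / c1 with hr
  have hc0 : c0 = c1 * r := by rw [hr]; field_simp
  have hr1 : 1 < r := (one_lt_div hc1).2 hc01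
  set d := Real.sqrt (4 * θ * r + (1 - θ) ^ 2) with hd
  have hd0 : 0 ≤ d := Real.sqrt_nonneg _
  have hdd : d * d = 4 * θ * r + (1 - θ) ^ 2 := Real.mul_self_sqrt (by positivity)
  have hθr : 0 < θ * (r - 1) := mul_pos hθ (by linarith)
  have d1 : 1 + θ < d := by nlinarith
  have d2 : d < 2 * θ * r + (1 - θ) := by
    have : 0 < θ * (θ * (r - 1)) * r := by positivity
    nlinarith
  have eA : -sA θ r = (d - (1 - θ)) / (2 * θ) := by rw [sA, ← hd]; field_simp; ring
  have eB : sB θ r = (d + (1 - θ)) / (2 * θ) := by rw [sB, ← hd]; field_simp; ring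
  have hsb : 0 < sB θ r := by rw [eB]; apply div_pos <;> linarith
  have hra : 1 < -sA θ r := by rw [eA, lt_div_iff₀ (by linarith)]; linarith
  have e1 : (c0 - c1 * -sA θ r) * (1 - 1 / -sA θ r) ^ (1 / θ) = a := by
    rw [← hJa, Jmap]
    have : sA θ r ≠ 0 := by linarith
    congr 2
    · ring
    · field_simp
      ring
  have e2 : (c1 * sB θ r + c0) * (1 + 1 / sB θ r) ^ (1 / θ) = b := by
    rw [← hJb, Jmap]
    congr 2
    field_simp
  have g : Good θ c0 c1 (sB θ r) (-sA θ r) := by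
    refine ⟨hθ, by linarith, hc1, hsb, hra, ?_, ?_, ?_, by rw [e1, e2]; exact hab⟩
    · rw [hc0]
      refine mul_lt_mul_of_pos_left ?_ hc1
      rw [eA, div_lt_iff₀ (by linarith)]; linarith
    · rw [eA, eB]; field_simp; ring
    · rw [eA, eB, hc0]; field_simp; linear_combination hdd
  exact ⟨g, (X_zero _).trans e2, (X_pi _).trans e1⟩

/-- Integrate the Euler–Lagrange equality along `φ ↦ X φ`, exchange the integrals, and evaluate the
inner ones by `potential` for the two dual maps. -/
theorem main (θ a b : ℝ) (hθ : 0 < θ) (hab : a < b)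
    (c0 c1 : ℝ) (hc1 : 0 < c1) (hc01 : c1 < c0)
    (hJa : Jmap θ c0 c1 (sA θ (c0 / c1)) = a)
    (hJb : Jmap θ c0 c1 (sB θ (c0 / c1)) = b)
    (μ : Measure ℝ) [IsProbabilityMeasure μ] (hsupp : μ (Set.Icc a b)ᶜ = 0)
    (ℓ : ℝ)
    (hEL : ∀ x ∈ Set.Icc a b,
      (∫ y, Real.log |x - y| ∂μ) + (∫ y, Real.log |x ^ θ - y ^ θ| ∂μ) = -ℓ) :
    ℓ = -Real.log c1 - θ * Real.log c0 := by
  obtain ⟨h, hX0, hXπ⟩ := good_of hθ hab hc1 hc01 hJa hJb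
  set P := par1 h with hP
  set Q := par2 h with hQ
  have hpi := Real.pi_pos
  have m0 : (0 : ℝ) ∈ Icc 0 Real.pi := left_mem_Icc.2 hpi.le
  have mπ : Real.pi ∈ Icc 0 Real.pi := right_mem_Icc.2 hpi.le
  have hdual : ∀ φ ∈ Icc 0 Real.pi, X Q φ = X P φ ^ θ := fun φ hφ => X_dual h hφ
  have hanti := (strictAntiOn_X P).antitoneOn
  have hmem : ∀ φ ∈ Icc 0 Real.pi, X P φ ∈ Icc a b := fun φ hφ =>
    ⟨hXπ ▸ hanti hφ mπ hφ.2, hX0 ▸ hanti m0 hφ hφ.1⟩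
  have hsurj : ∀ᵐ y ∂μ, ∃ ψ ∈ Icc 0 Real.pi, y = X P ψ := by
    have : ∀ᵐ y ∂μ, y ∈ Icc a b := hsupp
    filter_upwards [this] with y hy
    have := intermediate_value_Icc' hpi.le (continuousOn_X P)
    rw [hX0, hXπ] at this
    obtain ⟨ψ, hψ, e⟩ := this hy
    exact ⟨ψ, hψ, e.symm⟩
  have hsurj' : ∀ᵐ y ∂μ, ∃ ψ ∈ Icc 0 Real.pi, y ^ θ = X Q ψ := by
    filter_upwards [hsurj] with y ⟨ψ, hψ, e⟩
    exact ⟨ψ, hψ, by rw [e, hdual ψ hψ]⟩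
  have i1 := integrable_kernel P measurable_id μ hsurj
  have i2 := integrable_kernel Q (f := fun y => y ^ θ)
    (measurable_id.pow_const θ) μ hsurj'
  have s1 := integral_integral_swap (f := fun φ y => Real.log |X P φ - y|) i1
  have s2 := integral_integral_swap (f := fun φ y => Real.log |X Q φ - y ^ θ|) i2
  have lhs : ∫ φ in Ioo 0 Real.pi, ((∫ y, Real.log |X P φ - y| ∂μ) +
      ∫ y, Real.log |X Q φ - y ^ θ| ∂μ) = Real.pi * -ℓ := by
    have : ∀ φ ∈ Ioo 0 Real.pi, ((∫ y, Real.log |X P φ - y| ∂μ) +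
      ∫ y, Real.log |X Q φ - y ^ θ| ∂μ) = -ℓ := by
      intro φ hφ
      have hφ := Ioo_subset_Icc_self hφ
      rw [hdual φ hφ]
      exact hEL _ (hmem φ hφ)
    rw [setIntegral_congr_fun measurableSet_Ioo this, setIntegral_const]
    simp [hpi.le]
  have rhs : ∫ y, ((∫ φ in Ioo 0 Real.pi, Real.log |X P φ - y|) +
      ∫ φ in Ioo 0 Real.pi, Real.log |X Q φ - y ^ θ|) ∂μ =
      Real.pi * (Real.log c1 + θ * Real.log c0) := by
    have : ∀ᵐ y ∂μ, ((∫ φ in Ioo 0 Real.pi, Real.log |X P φ - y|) +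
      ∫ φ in Ioo 0 Real.pi, Real.log |X Q φ - y ^ θ|) =
      Real.pi * (Real.log c1 + θ * Real.log c0) := by
      filter_upwards [hsurj] with y ⟨ψ, hψ, e⟩
      have e' : y ^ θ = X Q ψ := by rw [e, hdual ψ hψ]
      rw [e', e, (potential P hψ).2, (potential Q hψ).2, kap_one,
        kap_two, U_dual h hψ]
      ring
    rw [integral_congr_ae this]
    simp
  have hsum_l := integral_add i1.integral_prod_left i2.integral_prod_left
  have hsum_r := integral_add i1.integral_prod_right i2.integral_prod_right
  have : Real.pi * -ℓ = Real.pi * (Real.log c1 + θ * Real.log c0) :=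
    lhs.symm.trans (hsum_l.trans ((congrArg₂ (· + ·) s1 s2).trans (hsum_r.symm.trans rhs)))
  have := mul_left_cancel₀ hpi.ne' this
  linarith

end EqMeas

/-- Fix `θ > 0` and `0 < a < b`, and let `(c0, c1)` with `c0 > c1 > 0` satisfy
`J(s_a) = a`, `J(s_b) = b`. If a Borel probability measure `μ` on `[a, b]` and a
constant `ℓ ∈ ℝ` satisfy the Euler–Lagrange equality
`∫ log|x − y| dμ(y) + ∫ log|x^θ − y^θ| dμ(y) = −ℓ` for all `x ∈ [a, b]`,
then `ℓ = −log c1 − θ·log c0`. -/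
theorem stmt10 (θ a b : ℝ) (hθ : 0 < θ) (ha : 0 < a) (hab : a < b)
    (c0 c1 : ℝ) (hc1 : 0 < c1) (hc01 : c1 < c0)
    (hJa : Jmap θ c0 c1 (sA θ (c0 / c1)) = a)
    (hJb : Jmap θ c0 c1 (sB θ (c0 / c1)) = b)
    (μ : Measure ℝ) [IsProbabilityMeasure μ] (hsupp : μ (Set.Icc a b)ᶜ = 0)
    (ℓ : ℝ)
    (hEL : ∀ x ∈ Set.Icc a b,
      (∫ y, Real.log |x - y| ∂μ) + (∫ y, Real.log |x ^ θ - y ^ θ| ∂μ) = -ℓ) :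
    ℓ = -Real.log c1 - θ * Real.log c0 :=
  EqMeas.main θ a b hθ hab c0 c1 hc1 hc01 hJa hJb μ hsupp ℓ hEL
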